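/- arXiv:2202.06215 — 4 statements merged into one kernel-verified Lean document; each statement's English description precedes it below -/
import Mathlib

section
/- (Transversality of the linear frequencies, Proposition 5.4.) There exist an integer k₀* ≥ 0 and a constant ρ₀ > 0 such that for every γ ∈ [γ₁,γ₂] the following hold, where ∂_γ^k denotes the k-th derivative in γ and ⟨ℓ⟩ := max{1,|ℓ|}: (a) max_{0≤k≤k₀*} |∂_γ^k ( ω⃗(γ)·ℓ )| ≥ ρ₀⟨ℓ⟩ for all ℓ ∈ ℤ^{|𝕊|} \ {0}; (b) max_{0≤k≤k₀*} |∂_γ^k ( ω⃗(γ)·ℓ + j Ω₁(γ) )| ≥ ρ₀⟨ℓ⟩ for all (ℓ,j) ∈ (ℤ^{|𝕊|}×ℤ) \ {(0,0)}; (c) max_{0≤k≤k₀*} |∂_γ^k ( ω⃗(γ)·ℓ + Ω_n(γ) )| ≥ ρ₀⟨ℓ⟩ for all ℓ ∈ ℤ^{|𝕊|} and all n ∈ ({1} ∪ {n̄+1, n̄+2, …}) \ 𝕊; (d) max_{0≤k≤k₀*} |∂_γ^k ( ω⃗(γ)·ℓ + Ω_n(γ) − Ω_{n'}(γ) )| ≥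 ρ₀⟨ℓ⟩ for all ℓ ∈ ℤ^{|𝕊|} and all n, n' ∈ ({1} ∪ {n̄+1, n̄+2, …}) \ 𝕊 with (ℓ,n,n') ≠ (0,n,n); (e) max_{0≤k≤k₀*} |∂_γ^k ( ω⃗(γ)·ℓ + Ω_n(γ) + Ω_{n'}(γ) )| ≥ ρ₀⟨ℓ⟩ for all ℓ ∈ ℤ^{|𝕊|} and all n, n' ∈ ({1} ∪ {n̄+1, n̄+2, …}) \ 𝕊. -/
open Real

/-- `Ω_γ := γ/(1+γ)²`. -/
noncomputable def OmG (γ : ℝ) : ℝ := γ / (1 + γ) ^ 2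

/-- `κ_n(γ) := ((γ−1)/(γ+1))ⁿ`. -/
noncomputable def kap (n : ℕ) (γ : ℝ) : ℝ := ((γ - 1) / (γ + 1)) ^ n

/-- `μ_n^+(γ) := nΩ_γ − 1/2 + κ_n(γ)/2`. -/
noncomputable def muP (n : ℕ) (γ : ℝ) : ℝ := n * OmG γ - 1 / 2 + kap n γ / 2

/-- `μ_n^-(γ) := nΩ_γ − 1/2 − κ_n(γ)/2`. -/
noncomputable def muM (n : ℕ) (γ : ℝ) : ℝ := n * OmG γ - 1 / 2 - kap n γ / 2

/-- `Ω_n(γ) := √(μ_n^+(γ) μ_n^-(γ))`. -/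
noncomputable def Om (n : ℕ) (γ : ℝ) : ℝ := Real.sqrt (muP n γ * muM n γ)

/-- `⟨ℓ⟩ := max {1, |ℓ|}`. -/
noncomputable def brk {m : ℕ} (ℓ : Fin m → ℤ) : ℝ :=
  max 1 ((Finset.univ.sup (fun i => (ℓ i).natAbs) : ℕ) : ℝ)

/-!
In the variable `y = ((γ - 1) / (γ + 1))²` one has `Ω_1 = (1 - y) / 4`, while
`Ω_n = n Ω_1 - 1/2 - yⁿ h_n` with `h_n` not vanishing at `y = 0`. Comparing orders of vanishing at
`γ = 1` shows that `1`, `Ω_1` and any finitely many `Ω_n` are linearly independent; as they are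
analytic, compactness bounds some derivative of a combination from below by its coefficients.

For the unboundedly many remaining indices, `Ω_n - (n Ω_1 - 1/2)` and its derivatives are
exponentially small in `n`, by Cauchy's estimates for its holomorphic extension. At most two such
indices `n` occur, with integer coefficients `c n`, and they contribute `v Ω_1 - w / 2` up to these
errors, where `v = ∑ n c n` and `w = ∑ c n` over `n ≠ 1`. Since `v` and `w` control the two
coefficients, the errors are absorbed, and since they are integers the bound is uniform. Indices
which are not far away are finitely many and join the first family.
-/

section General

open Filter Topology

theorem coeff_eq_zero_of_sum_mul_pow_mul_eventually_eq_zero {α 𝕜 : Type*} [Field 𝕜]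
    [TopologicalSpace 𝕜] [IsTopologicalSemiring 𝕜] [T2Space 𝕜] {l : Filter α} [l.NeBot]
    {y : α → 𝕜} (hy : Tendsto y l (𝓝 0)) (hy0 : ∀ᶠ a in l, y a ≠ 0) {J : Finset ℕ}
    {h : ℕ → α → 𝕜} {H : ℕ → 𝕜} (hh : ∀ n ∈ J, Tendsto (h n) l (𝓝 (H n)))
    (hH : ∀ n ∈ J, H n ≠ 0) {c : ℕ → 𝕜}
    (hc : ∀ᶠ a in l, ∑ n ∈ J, c n * (y a ^ n * h n a) = 0) :
    ∀ n ∈ J, c n = 0 := by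
  intro n
  induction n using Nat.strong_induction_on with
  | _ n ih =>
  intro hn
  have hlim : Tendsto (fun a => ∑ k ∈ J, c k * (y a ^ (k - n) * h k a)) l
      (𝓝 (∑ k ∈ J, c k * (0 ^ (k - n) * H k))) :=
    tendsto_finsetSum _ fun k hk => ((hy.pow _).mul (hh k hk)).const_mul _
  have hval : ∑ k ∈ J, c k * (0 ^ (k - n) * H k) = c n * H n := by
    rw [Finset.sum_eq_single_of_mem n hn]
    · simp
    · intro k hk hkn
      rcases lt_or_gt_of_ne hkn with hlt | hgt
      · simp [ih k hlt hk]
      · simp [Nat.sub_ne_zero_of_lt hgt]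
  have hzero : ∀ᶠ a in l, ∑ k ∈ J, c k * (y a ^ (k - n) * h k a) = 0 := by
    filter_upwards [hc, hy0] with a ha hya
    have hfactor : y a ^ n * ∑ k ∈ J, c k * (y a ^ (k - n) * h k a) = 0 := by
      rw [← ha, Finset.mul_sum]
      refine Finset.sum_congr rfl fun k hk => ?_
      rcases lt_or_ge k n with hlt | hge
      · simp [ih k hlt hk]
      · rw [← Nat.add_sub_of_le hge, pow_add, Nat.add_sub_cancel_left]
        ring
    exact (mul_eq_zero.mp hfactor).resolve_left (pow_ne_zero _ hya)
  have hcH : c n * H n = 0 :=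
    hval ▸ tendsto_nhds_unique hlim (tendsto_const_nhds.congr' (hzero.mono fun _ ha => ha.symm))
  exact (mul_eq_zero.mp hcH).resolve_right (hH n hn)

theorem coeff_eq_zero_of_affine_add_sum_eventually_eq_zero {α 𝕜 : Type*} [Field 𝕜]
    [TopologicalSpace 𝕜] [IsTopologicalSemiring 𝕜] [T2Space 𝕜] {l : Filter α} [l.NeBot]
    {y : α → 𝕜} (hy : Tendsto y l (𝓝 0)) (hy0 : ∀ᶠ a in l, y a ≠ 0) {J : Finset ℕ}
    (hJ : ∀ n ∈ J, 2 ≤ n) {h : ℕ → α → 𝕜} {H : ℕ → 𝕜} (hh : ∀ n ∈ J, Tendsto (h n) l (𝓝 (H n)))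
    (hH : ∀ n ∈ J, H n ≠ 0) {p q : 𝕜} {c : ℕ → 𝕜}
    (hc : ∀ᶠ a in l, p + q * y a + ∑ n ∈ J, c n * (y a ^ n * h n a) = 0) :
    p = 0 ∧ q = 0 ∧ ∀ n ∈ J, c n = 0 := by
  have h0 : 0 ∉ insert 1 J := by simpa using fun h => absurd (hJ 0 h) (by lia)
  have h1 : 1 ∉ J := fun h => absurd (hJ 1 h) (by lia)
  let c' : ℕ → 𝕜 := fun n => if n = 0 then p else if n = 1 then q else c n
  let h' : ℕ → α → 𝕜 := fun n => if n < 2 then 1 else h n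
  let H' : ℕ → 𝕜 := fun n => if n < 2 then 1 else H n
  have hc' : ∀ n ∈ J, c' n = c n := fun n hn => by
    have := hJ n hn
    simp only [c', show n ≠ 0 by lia, show n ≠ 1 by lia, if_false]
  have hh' : ∀ n ∈ J, h' n = h n := fun n hn => if_neg (hJ n hn).not_gt
  have hH' : ∀ n ∈ J, H' n = H n := fun n hn => if_neg (hJ n hn).not_gt
  have hzero := coeff_eq_zero_of_sum_mul_pow_mul_eventually_eq_zero (J := insert 0 (insert 1 J))
    (h := h') (H := H') (c := c') hy hy0
    (by
      simp only [Finset.forall_mem_insert]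
      exact ⟨tendsto_const_nhds, tendsto_const_nhds, fun n hn => hh' n hn ▸ hH' n hn ▸ hh n hn⟩)
    (by
      simp only [Finset.forall_mem_insert]
      exact ⟨one_ne_zero, one_ne_zero, fun n hn => hH' n hn ▸ hH n hn⟩)
    (by
      filter_upwards [hc] with a ha
      rw [← ha, Finset.sum_insert h0, Finset.sum_insert h1, ← add_assoc]
      congr 1
      · simp [c', h']
      · exact Finset.sum_congr rfl fun n hn => by rw [hc' n hn, hh' n hn])
  exact ⟨hzero 0 (by simp), hzero 1 (by simp), fun n hn => hc' n hn ▸ hzero n (by simp [hn])⟩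

theorem exists_forall_mul_norm_le_norm_apply {X E F : Type*} [TopologicalSpace X] [CompactSpace X]
    [NormedAddCommGroup E] [NormedSpace ℝ E] [ProperSpace E] [NormedAddCommGroup F]
    [NormedSpace ℝ F] {Λ : ℕ → X → E →L[ℝ] F} (hΛ : ∀ k, Continuous (Λ k))
    (hinj : ∀ x v, (∀ k, Λ k x v = 0) → v = 0) :
    ∃ k₀ : ℕ, ∃ ρ > 0, ∀ x v, ∃ k ≤ k₀, ρ * ‖v‖ ≤ ‖Λ k x v‖ := by
  let U : ℕ → Set (X × Metric.sphere (0 : E) 1) := fun N =>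
    {p | ∃ k ≤ N, 1 / (N + 1 : ℝ) < ‖Λ k p.1 p.2‖}
  have hUopen : ∀ N, IsOpen (U N) := fun N => by
    have hU : U N = ⋃ k ≤ N, {p | 1 / (N + 1 : ℝ) < ‖Λ k p.1 p.2‖} := by
      ext p
      simp [U]
    rw [hU]
    refine isOpen_biUnion fun k _ => isOpen_lt continuous_const (Continuous.norm ?_)
    exact ((hΛ k).comp continuous_fst).clm_apply (continuous_subtype_val.comp continuous_snd)
  have hUmono : Monotone U := fun N N' hNN' p ⟨k, hk, hlt⟩ =>
    ⟨k, hk.trans hNN', (Nat.one_div_le_one_div hNN').trans_lt hlt⟩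
  have hUcover : Set.univ ⊆ ⋃ N, U N := by
    rintro ⟨x, v, hv⟩ -
    have hv0 : v ≠ 0 := ne_zero_of_mem_unit_sphere ⟨v, hv⟩
    obtain ⟨k, hk⟩ := not_forall.mp (mt (hinj x v) hv0)
    obtain ⟨N, hN⟩ := exists_nat_one_div_lt (norm_pos_iff.mpr hk)
    exact Set.mem_iUnion.mpr ⟨max k N, k, le_max_left _ _,
      (Nat.one_div_le_one_div (le_max_right _ _)).trans_lt hN⟩
  obtain ⟨N, hN⟩ := isCompact_univ.elim_directed_cover U hUopen hUcover hUmono.directed_le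
  refine ⟨N, 1 / (N + 1), by positivity, fun x v => ?_⟩
  rcases eq_or_ne v 0 with rfl | hv
  · exact ⟨0, Nat.zero_le _, by simp⟩
  have hvpos := norm_pos_iff.mpr hv
  have hunit : ‖v‖⁻¹ • v ∈ Metric.sphere (0 : E) 1 := by simp [norm_smul, hvpos.ne']
  obtain ⟨k, hk, hlt⟩ := hN (Set.mem_univ (x, ⟨_, hunit⟩))
  refine ⟨k, hk, ?_⟩
  rw [map_smul, norm_smul, norm_inv, norm_norm, inv_mul_eq_div, lt_div_iff₀ hvpos] at hlt
  exact hlt.le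

theorem eventuallyEq_zero_of_iteratedDeriv_eq_zero {𝕜 E : Type*} [NontriviallyNormedField 𝕜]
    [CharZero 𝕜] [NormedAddCommGroup E] [NormedSpace 𝕜 E] [CompleteSpace E] {f : 𝕜 → E} {x : 𝕜}
    (hf : AnalyticAt 𝕜 f x) (h : ∀ k, iteratedDeriv k f x = 0) : f =ᶠ[𝓝 x] 0 :=
  analyticOrderAt_eq_top.mp <| ENat.eq_top_iff_forall_ge.mpr fun _ =>
    (natCast_le_analyticOrderAt_iff_iteratedDeriv_eq_zero hf).mpr fun k _ => h k

theorem iteratedDeriv_sum_const_mul {ι 𝕜 : Type*} [NontriviallyNormedField 𝕜] (s : Finset ι)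
    (c : ι → 𝕜) {f : ι → 𝕜 → 𝕜} {x : 𝕜} {k : ℕ} (hf : ∀ i ∈ s, ContDiffAt 𝕜 k (f i) x) :
    iteratedDeriv k (fun y => ∑ i ∈ s, c i * f i y) x =
      ∑ i ∈ s, c i * iteratedDeriv k (f i) x := by
  rw [iteratedDeriv_fun_sum fun i hi => contDiffAt_const.mul (hf i hi)]
  exact Finset.sum_congr rfl fun i hi => iteratedDeriv_const_mul _ (hf i hi)

theorem exists_mul_norm_le_abs_iteratedDeriv_sum {ι : Type*} [Fintype ι] {f : ι → ℝ → ℝ}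
    {K : Set ℝ} (hK : IsCompact K) (hKc : IsPreconnected K) (hf : ∀ i, AnalyticOnNhd ℝ (f i) K)
    (hli : LinearIndependent ℝ fun i => K.domRestrict (f i)) :
    ∃ k₀ : ℕ, ∃ ρ > 0, ∀ x ∈ K, ∀ c : ι → ℝ, ∃ k ≤ k₀,
      ρ * ‖c‖ ≤ |iteratedDeriv k (fun y => ∑ i, c i * f i y) x| := by
  have : CompactSpace K := isCompact_iff_compactSpace.mp hK
  let Λ : ℕ → K → (ι → ℝ) →L[ℝ] ℝ := fun k x =>
    ∑ i, iteratedDeriv k (f i) x • ContinuousLinearMap.proj i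
  have hΛ : ∀ k (x : K) c, Λ k x c = iteratedDeriv k (fun y => ∑ i, c i * f i y) x := by
    intro k x c
    rw [iteratedDeriv_sum_const_mul _ _ fun i _ => (hf i x x.2).contDiffAt]
    simp [Λ, mul_comm]
  have hcont : ∀ k, Continuous (Λ k) := fun k => by
    refine continuous_finsetSum _ fun i _ => ?_
    have hcont_i : ContinuousOn (iteratedDeriv k (f i)) K := by
      rw [iteratedDeriv_eq_iterate]
      exact ((hf i).iterated_deriv k).continuousOn
    exact hcont_i.domRestrict.smul continuous_const
  have hinj : ∀ (x : K) c, (∀ k, Λ k x c = 0) → c = 0 := by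
    intro x c hc
    have hsum : AnalyticOnNhd ℝ (fun y => ∑ i, c i * f i y) K := fun y hy =>
      Finset.analyticAt_fun_sum _ fun i _ => analyticAt_const.mul (hf i y hy)
    have hzero := hsum.eqOn_zero_of_preconnected_of_eventuallyEq_zero hKc x.2
      (eventuallyEq_zero_of_iteratedDeriv_eq_zero (hsum x x.2) fun k => hΛ k x c ▸ hc k)
    refine funext (Fintype.linearIndependent_iff.mp hli c (funext fun y => ?_))
    simpa [Finset.sum_apply, Set.domRestrict_apply] using hzero y.2
  obtain ⟨k₀, ρ, hρ, h⟩ := exists_forall_mul_norm_le_norm_apply hcont hinj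
  refine ⟨k₀, ρ, hρ, fun x hx c => ?_⟩
  simpa only [hΛ, Real.norm_eq_abs] using h ⟨x, hx⟩ c

theorem iteratedDeriv_re_comp_ofReal {F : ℂ → ℂ} {x : ℝ} (hF : AnalyticAt ℂ F x) (k : ℕ) :
    iteratedDeriv k (fun t : ℝ => (F t).re) x = (iteratedDeriv k F x).re := by
  induction k generalizing F with
  | zero => simp
  | succ k ih =>
    have hderiv : deriv (fun t : ℝ => (F t).re) =ᶠ[𝓝 x] fun t => (deriv F t).re := by
      filter_upwards [Complex.continuous_ofReal.continuousAt.eventually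
        hF.eventually_analyticAt] with t ht
      exact ht.differentiableAt.hasDerivAt.real_of_complex.deriv
    rw [iteratedDeriv_succ', hderiv.iteratedDeriv_eq, ih hF.deriv, iteratedDeriv_succ']

theorem abs_iteratedDeriv_le_of_eventuallyEq_re {f : ℝ → ℝ} {F : ℂ → ℂ} {x R C : ℝ} (hR : 0 < R)
    (hF : DifferentiableOn ℂ F (Metric.closedBall x R))
    (hC : ∀ z ∈ Metric.sphere (x : ℂ) R, ‖F z‖ ≤ C) (hf : f =ᶠ[𝓝 x] fun t => (F t).re) (k : ℕ) :
    |iteratedDeriv k f x| ≤ k.factorial * C / R ^ k := by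
  have han : AnalyticAt ℂ F x := hF.analyticAt (Metric.closedBall_mem_nhds _ hR)
  rw [hf.iteratedDeriv_eq, iteratedDeriv_re_comp_ofReal han]
  exact (Complex.abs_re_le_norm _).trans <|
    Complex.norm_iteratedDeriv_le_of_forall_mem_sphere_norm_le k hR
      (hF.diffContOnCl_ball subset_rfl) hC

end General

section Frequencies

open Filter Topology

/-- The square of the Cayley transform `(z - 1) / (z + 1)`, in which the expansions of the
frequencies at `γ = 1` are written; it is used over `ℝ` and over `ℂ`. -/
def cayleySq {𝕜 : Type*} [Field 𝕜] (z : 𝕜) : 𝕜 := ((z - 1) / (z + 1)) ^ 2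

/-- The difference between the affine frequency `n Ω_γ - 1/2` and `Ω_n`. -/
noncomputable def freqDefect (n : ℕ) (γ : ℝ) : ℝ := n * OmG γ - 1 / 2 - Om n γ

/-- The factor multiplying `cayleySq γ ^ n` in `freqDefect n γ`; unlike the power, it does not
vanish at `γ = 1`. -/
noncomputable def defectFactor (n : ℕ) (γ : ℝ) : ℝ := (4 * (n * OmG γ - 1 / 2 + Om n γ))⁻¹

theorem OmG_eq_one_sub_cayleySq {γ : ℝ} (hγ : γ + 1 ≠ 0) : OmG γ = (1 - cayleySq γ) / 4 := by
  rw [OmG, cayleySq, add_comm 1 γ]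
  field_simp
  ring

theorem OmG_pos {γ : ℝ} (hγ : 0 < γ) : 0 < OmG γ := by
  unfold OmG
  positivity

theorem kap_nonneg (n : ℕ) {γ : ℝ} (hγ : 1 ≤ γ) : 0 ≤ kap n γ :=
  pow_nonneg (div_nonneg (by linarith) (by linarith)) n

theorem kap_sq (n : ℕ) (γ : ℝ) : kap n γ ^ 2 = cayleySq γ ^ n :=
  pow_right_comm _ _ _

theorem muM_le_muM {N n : ℕ} (hn : N ≤ n) {γ γ' : ℝ} (hγ : 1 ≤ γ) (hγγ' : γ ≤ γ') :
    muM N γ' ≤ muM n γ := by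
  have h0 : 0 ≤ (γ - 1) / (γ + 1) := div_nonneg (by linarith) (by linarith)
  have h01 : (γ - 1) / (γ + 1) ≤ (γ' - 1) / (γ' + 1) := by
    rw [div_le_div_iff₀ (by linarith) (by linarith)]
    linarith
  have h1 : (γ - 1) / (γ + 1) ≤ 1 := div_le_one_of_le₀ (by linarith) (by linarith)
  have hkap : kap n γ ≤ kap N γ' :=
    (pow_le_pow_of_le_one h0 h1 hn).trans (pow_le_pow_left₀ h0 h01 N)
  have hOmG : OmG γ' ≤ OmG γ := by
    rw [OmG_eq_one_sub_cayleySq (by linarith), OmG_eq_one_sub_cayleySq (by linarith)]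
    have : cayleySq γ ≤ cayleySq γ' := pow_le_pow_left₀ h0 h01 2
    linarith
  have hmul : (N : ℝ) * OmG γ' ≤ n * OmG γ :=
    mul_le_mul (by exact_mod_cast hn) hOmG (OmG_pos (by linarith)).le (by positivity)
  unfold muM
  linarith

theorem two_lt_of_muM_pos {n : ℕ} {γ : ℝ} (hγ : 1 ≤ γ) (h : 0 < muM n γ) : 2 < n := by
  by_contra! hn
  have h2 : muM 2 γ = -cayleySq γ := by
    rw [muM, OmG_eq_one_sub_cayleySq (by linarith), kap, ← cayleySq]
    push_cast
    ring
  have hsq : 0 ≤ cayleySq γ := sq_nonneg _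
  linarith [muM_le_muM hn hγ le_rfl]

theorem muP_mul_muM (n : ℕ) (γ : ℝ) :
    muP n γ * muM n γ = (n * OmG γ - 1 / 2) ^ 2 - cayleySq γ ^ n / 4 := by
  rw [← kap_sq, muP, muM]
  ring

theorem muP_mul_muM_one {γ : ℝ} (hγ : γ + 1 ≠ 0) : muP 1 γ * muM 1 γ = OmG γ ^ 2 := by
  rw [muP_mul_muM, OmG_eq_one_sub_cayleySq hγ]
  push_cast
  ring

theorem muP_mul_muM_pos {n : ℕ} {γ : ℝ} (hγ : 1 ≤ γ) (h : 0 < muM n γ) :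
    0 < muP n γ * muM n γ := by
  have hle : muM n γ ≤ muP n γ := by
    have := kap_nonneg n hγ
    unfold muP muM
    linarith
  exact mul_pos (h.trans_le hle) h

theorem Om_one {γ : ℝ} (hγ : 0 < γ) : Om 1 γ = OmG γ := by
  rw [Om, muP_mul_muM_one (by linarith), Real.sqrt_sq (OmG_pos hγ).le]

theorem affine_pos {n : ℕ} {γ : ℝ} (hγ : 1 ≤ γ) (h : 0 < muM n γ) : 0 < n * OmG γ - 1 / 2 := by
  have := kap_nonneg n hγ
  unfold muM at h
  linarith

theorem defectFactor_pos {n : ℕ} {γ : ℝ} (hγ : 1 ≤ γ) (h : 0 < muM n γ) :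
    0 < defectFactor n γ := by
  have hOm : 0 ≤ Om n γ := Real.sqrt_nonneg _
  have := affine_pos hγ h
  unfold defectFactor
  positivity

theorem freqDefect_eq {n : ℕ} {γ : ℝ} (hγ : 1 ≤ γ) (h : 0 < muM n γ) :
    freqDefect n γ = cayleySq γ ^ n * defectFactor n γ := by
  have hsq : Om n γ ^ 2 = (n * OmG γ - 1 / 2) ^ 2 - cayleySq γ ^ n / 4 := by
    rw [Om, Real.sq_sqrt (muP_mul_muM_pos hγ h).le, muP_mul_muM]
  have hne := (inv_pos.mp (defectFactor_pos hγ h)).ne'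
  rw [defectFactor, ← div_eq_mul_inv, eq_div_iff hne, freqDefect]
  linear_combination (-4) * hsq

theorem analyticAt_OmG {γ : ℝ} (hγ : 0 < γ) : AnalyticAt ℝ OmG γ :=
  analyticAt_id.div (by fun_prop) (by positivity)

theorem analyticAt_kap (n : ℕ) {γ : ℝ} (hγ : γ + 1 ≠ 0) : AnalyticAt ℝ (kap n) γ :=
  ((analyticAt_id.sub analyticAt_const).div (analyticAt_id.add analyticAt_const) hγ).pow n

theorem analyticAt_Om {n : ℕ} {γ : ℝ} (hγ : 0 < γ) (h : 0 < muP n γ * muM n γ) :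
    AnalyticAt ℝ (Om n) γ := by
  have hOmG := analyticAt_OmG hγ
  have hkap := analyticAt_kap n (γ := γ) (by linarith)
  have hprod : AnalyticAt ℝ (fun x => muP n x * muM n x) γ := by
    unfold muP muM
    fun_prop
  exact (hprod.contDiffAt.sqrt h.ne').analyticAt

theorem analyticAt_Om_one {γ : ℝ} (hγ : 0 < γ) : AnalyticAt ℝ (Om 1) γ :=
  analyticAt_Om hγ (by rw [muP_mul_muM_one (by linarith)]; exact pow_pos (OmG_pos hγ) 2)

theorem tendsto_cayleySq_nhdsGT_one : Tendsto cayleySq (𝓝[>] (1 : ℝ)) (𝓝 0) := by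
  have hcont : ContinuousAt (fun γ : ℝ => ((γ - 1) / (γ + 1)) ^ 2) 1 := by
    have : (1 : ℝ) + 1 ≠ 0 := by norm_num
    fun_prop (disch := assumption)
  have hlim := hcont.tendsto.mono_left (nhdsWithin_le_nhds (s := Set.Ioi 1))
  rwa [sub_self, zero_div, zero_pow two_ne_zero] at hlim

theorem cayleySq_ne_zero {γ : ℝ} (hγ : 1 < γ) : cayleySq γ ≠ 0 :=
  pow_ne_zero _ (div_ne_zero (by linarith) (by linarith))

theorem muM_pos_of_mem_Icc {N : ℕ} {γ₂ : ℝ} (hmu : 0 < muM N γ₂) {n : ℕ} (hn : N ≤ n) {γ : ℝ}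
    (hγ : γ ∈ Set.Icc 1 γ₂) : 0 < muM n γ :=
  hmu.trans_le (muM_le_muM hn hγ.1 hγ.2)

theorem analyticOnNhd_Om {N : ℕ} {γ₂ : ℝ} (hmu : 0 < muM N γ₂) {n : ℕ} (hn : n = 1 ∨ N ≤ n) :
    AnalyticOnNhd ℝ (Om n) (Set.Icc 1 γ₂) := fun γ hγ => by
  have hγ0 : 0 < γ := one_pos.trans_le hγ.1
  rcases hn with rfl | hn
  · exact analyticAt_Om_one hγ0
  · exact analyticAt_Om hγ0 (muP_mul_muM_pos hγ.1 (muM_pos_of_mem_Icc hmu hn hγ))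

theorem continuousAt_defectFactor {n : ℕ} {γ : ℝ} (hγ : 1 ≤ γ) (h : 0 < muM n γ) :
    ContinuousAt (defectFactor n) γ := by
  have hγ0 : 0 < γ := one_pos.trans_le hγ
  have hOmG := (analyticAt_OmG hγ0).continuousAt
  have hOm := (analyticAt_Om hγ0 (muP_mul_muM_pos hγ h)).continuousAt
  have hden : ContinuousAt (fun γ => 4 * (n * OmG γ - 1 / 2 + Om n γ)) γ := by fun_prop
  exact hden.inv₀ ((inv_pos.mp (defectFactor_pos hγ h)).ne')

theorem add_mul_Om_one_add_sum_eq {γ : ℝ} (hγ : 1 ≤ γ) {J : Finset ℕ}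
    (hJ : ∀ n ∈ J, 0 < muM n γ) (p q : ℝ) (d : ℕ → ℝ) :
    p + q * Om 1 γ + ∑ n ∈ J, d n * Om n γ =
      (p + q / 4 + ∑ n ∈ J, d n * (n / 4 - 1 / 2))
        + (-(q / 4) - ∑ n ∈ J, d n * (n / 4)) * cayleySq γ
        + ∑ n ∈ J, -d n * (cayleySq γ ^ n * defectFactor n γ) := by
  have hterm : ∑ n ∈ J, d n * Om n γ = ∑ n ∈ J, (d n * (n / 4 - 1 / 2)
      - d n * (n / 4) * cayleySq γ + -d n * (cayleySq γ ^ n * defectFactor n γ)) :=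
    Finset.sum_congr rfl fun n hn => by
      rw [← freqDefect_eq hγ (hJ n hn), freqDefect, OmG_eq_one_sub_cayleySq (by linarith)]
      ring
  rw [hterm, Finset.sum_add_distrib, Finset.sum_sub_distrib, ← Finset.sum_mul,
    Om_one (by linarith), OmG_eq_one_sub_cayleySq (by linarith)]
  ring

theorem coeff_eq_zero_of_add_mul_Om_one_add_sum_eq_zero {N : ℕ} {γ₂ : ℝ} (hγ₂ : 1 < γ₂)
    (hmu : 0 < muM N γ₂) {J : Finset ℕ} (hJ : ∀ n ∈ J, N ≤ n) {p q : ℝ} {d : ℕ → ℝ}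
    (h : ∀ γ ∈ Set.Icc 1 γ₂, p + q * Om 1 γ + ∑ n ∈ J, d n * Om n γ = 0) :
    p = 0 ∧ q = 0 ∧ ∀ n ∈ J, d n = 0 := by
  have hmuJ : ∀ γ ∈ Set.Icc 1 γ₂, ∀ n ∈ J, 0 < muM n γ := fun γ hγ n hn =>
    muM_pos_of_mem_Icc hmu (hJ n hn) hγ
  have hmuJ1 := hmuJ 1 ⟨le_rfl, hγ₂.le⟩
  obtain ⟨hp, hq, hd⟩ := coeff_eq_zero_of_affine_add_sum_eventually_eq_zero
    tendsto_cayleySq_nhdsGT_one (eventually_mem_nhdsWithin.mono fun γ => cayleySq_ne_zero)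
    (fun n hn => (two_lt_of_muM_pos le_rfl (hmuJ1 n hn)).le)
    (fun n hn => (continuousAt_defectFactor le_rfl (hmuJ1 n hn)).tendsto.mono_left
      nhdsWithin_le_nhds)
    (fun n hn => (defectFactor_pos le_rfl (hmuJ1 n hn)).ne')
    (by
      filter_upwards [Ioc_mem_nhdsGT hγ₂] with γ hγ
      have hγ' : γ ∈ Set.Icc 1 γ₂ := ⟨hγ.1.le, hγ.2⟩
      rw [← add_mul_Om_one_add_sum_eq hγ'.1 (hmuJ γ hγ'), h γ hγ'])
  have hd' : ∀ n ∈ J, d n = 0 := fun n hn => neg_eq_zero.mp (hd n hn)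
  have hsum : ∀ g : ℕ → ℝ, ∑ n ∈ J, d n * g n = 0 := fun g =>
    Finset.sum_eq_zero fun n hn => by rw [hd' n hn, zero_mul]
  rw [hsum fun n => n / 4 - 1 / 2] at hp
  rw [hsum fun n => n / 4] at hq
  exact ⟨by linarith, by linarith, hd'⟩

theorem exists_mul_coeff_le_abs_iteratedDeriv {N : ℕ} {γ₂ : ℝ} (hγ₂ : 1 < γ₂)
    (hmu : 0 < muM N γ₂) {J : Finset ℕ} (hJ : ∀ n ∈ J, N ≤ n) :
    ∃ k₀ : ℕ, ∃ ρ > 0, ∀ γ ∈ Set.Icc 1 γ₂, ∀ (p q : ℝ) (d : ℕ → ℝ), ∃ k ≤ k₀,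
      let D := |iteratedDeriv k (fun x => p + q * Om 1 x + ∑ n ∈ J, d n * Om n x) γ|
      ρ * |p| ≤ D ∧ ρ * |q| ≤ D ∧ ∀ n ∈ J, ρ * |d n| ≤ D := by
  let f : Option (Option J) → ℝ → ℝ
    | none => 1
    | some none => Om 1
    | some (some n) => Om n
  have hf : ∀ i, AnalyticOnNhd ℝ (f i) (Set.Icc 1 γ₂)
    | none => analyticOnNhd_const
    | some none => analyticOnNhd_Om hmu (.inl rfl)
    | some (some n) => analyticOnNhd_Om hmu (.inr (hJ n n.2))
  have hsum : ∀ (c : Option (Option J) → ℝ) (x : ℝ), ∑ i, c i * f i x =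
      c none + c (some none) * Om 1 x + ∑ n : J, c (some (some n)) * Om n x := fun c x => by
    simp [f, Fintype.sum_option, add_assoc]
  have hli : LinearIndependent ℝ fun i => (Set.Icc 1 γ₂).domRestrict (f i) := by
    refine Fintype.linearIndependent_iff.mpr fun c hc => ?_
    obtain ⟨hp, hq, hd⟩ := coeff_eq_zero_of_add_mul_Om_one_add_sum_eq_zero hγ₂ hmu hJ
      (p := c none) (q := c (some none))
      (d := fun n => if hn : n ∈ J then c (some (some ⟨n, hn⟩)) else 0) fun γ hγ => by
        rw [← Finset.sum_coe_sort]
        simpa [hsum] using congr_fun hc ⟨γ, hγ⟩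
    rintro (_ | _ | n)
    exacts [hp, hq, by simpa using hd n n.2]
  obtain ⟨k₀, ρ, hρ, hbound⟩ :=
    exists_mul_norm_le_abs_iteratedDeriv_sum isCompact_Icc isPreconnected_Icc hf hli
  refine ⟨k₀, ρ, hρ, fun γ hγ p q d => ?_⟩
  let c : Option (Option J) → ℝ
    | none => p
    | some none => q
    | some (some n) => d n
  have hcomb : (fun x => ∑ i, c i * f i x) =
      fun x => p + q * Om 1 x + ∑ n ∈ J, d n * Om n x := funext fun x => by
    rw [hsum, ← Finset.sum_coe_sort J]
  obtain ⟨k, hk, hle⟩ := hbound γ hγ c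
  rw [hcomb] at hle
  have hcoeff : ∀ i, ρ * |c i| ≤ _ := fun i =>
    (mul_le_mul_of_nonneg_left (norm_le_pi_norm c i) hρ.le).trans hle
  exact ⟨k, hk, hcoeff none, hcoeff (some none), fun n hn => hcoeff (some (some ⟨n, hn⟩))⟩

end Frequencies

section ComplexDefect

open Filter Topology

/-- The affine frequency `n Ω_γ - 1/2` as a function of `y = cayleySq γ`, extended to `ℂ`. -/
noncomputable def complexAffine (n : ℕ) (y : ℂ) : ℂ := n * ((1 - y) / 4) - 1 / 2

/-- The ratio `κ_n² / (4 (n Ω_γ - 1/2)²)` as a function of `y = cayleySq γ`, extended to `ℂ`;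
one has `Ω_n = (n Ω_γ - 1/2) √(1 - ratio)`. -/
noncomputable def complexRatio (n : ℕ) (y : ℂ) : ℂ := y ^ n / (4 * complexAffine n y ^ 2)

/-- The function `freqDefect n` in the variable `y = cayleySq γ`, extended to `ℂ`. -/
noncomputable def complexDefect (n : ℕ) (y : ℂ) : ℂ :=
  complexAffine n y * (1 - (1 - complexRatio n y) ^ (2⁻¹ : ℂ))

theorem norm_one_sub_cpow_inv_two_le (w : ℂ) : ‖1 - (1 - w) ^ (2⁻¹ : ℂ)‖ ≤ ‖w‖ := by
  set s : ℂ := (1 - w) ^ (2⁻¹ : ℂ) with hs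
  have hsq : s ^ 2 = 1 - w := by simp [hs]
  have hre : 0 ≤ s.re := by
    rw [hs, Complex.cpow_inv_two_re]
    exact Real.sqrt_nonneg _
  have hone : 1 ≤ ‖1 + s‖ := le_trans (by simpa using hre) (Complex.re_le_norm _)
  calc ‖1 - s‖ ≤ ‖1 - s‖ * ‖1 + s‖ := le_mul_of_one_le_right (norm_nonneg _) hone
    _ = ‖w‖ := by
      rw [← norm_mul]
      congr 1
      linear_combination -hsq

theorem norm_cayleySq_le {γ γ₂ : ℝ} (hγ : γ ∈ Set.Icc 1 γ₂) {z : ℂ}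
    (hz : z ∈ Metric.closedBall (γ : ℂ) (1 / 2)) :
    z + 1 ≠ 0 ∧ ‖cayleySq z‖ ≤ 1 - 2 / (γ₂ + 2) ^ 2 := by
  rw [mem_closedBall_iff_norm] at hz
  have hre : 1 / 2 ≤ z.re := by
    have habs := (Complex.abs_re_le_norm (z - γ)).trans hz
    rw [Complex.sub_re, Complex.ofReal_re] at habs
    linarith [(abs_le.mp habs).1, hγ.1]
  have hne : z + 1 ≠ 0 := fun h => by
    have hre1 := congr_arg Complex.re h
    rw [Complex.add_re, Complex.one_re, Complex.zero_re] at hre1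
    linarith
  have hle : ‖z + 1‖ ≤ γ₂ + 2 :=
    calc ‖z + 1‖ = ‖(z - γ) + ((γ + 1 : ℝ) : ℂ)‖ := by push_cast; ring_nf
      _ ≤ 1 / 2 + (γ + 1) := by
        refine (norm_add_le _ _).trans (add_le_add hz ?_)
        rw [Complex.norm_of_nonneg (by linarith [hγ.1])]
      _ ≤ γ₂ + 2 := by linarith [hγ.2]
  have hsub : ‖z - 1‖ ^ 2 = ‖z + 1‖ ^ 2 - 4 * z.re := by
    simp only [Complex.sq_norm, Complex.normSq_apply, Complex.sub_re, Complex.sub_im,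
      Complex.add_re, Complex.add_im, Complex.one_re, Complex.one_im]
    ring
  have hpos := norm_pos_iff.mpr hne
  refine ⟨hne, ?_⟩
  rw [cayleySq, norm_pow, norm_div, div_pow, hsub, sub_div, div_self (pow_pos hpos 2).ne']
  gcongr
  linarith

theorem ofReal_cayleySq (x : ℝ) : ((cayleySq x : ℝ) : ℂ) = cayleySq (x : ℂ) := by
  simp [cayleySq]

section Disc

variable {q : ℝ} {n : ℕ} {y : ℂ}

theorem one_le_re_complexAffine (hn : 6 ≤ n * (1 - q)) (hy : ‖y‖ ≤ q) :
    1 ≤ (complexAffine n y).re := by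
  have hre : (complexAffine n y).re = n * (1 - y.re) / 4 - 1 / 2 := by
    have : complexAffine n y = ((n / 4 : ℝ) : ℂ) * (1 - y) - ((1 / 2 : ℝ) : ℂ) := by
      rw [complexAffine]
      push_cast
      ring
    rw [this, Complex.sub_re, Complex.re_ofReal_mul, Complex.ofReal_re, Complex.sub_re,
      Complex.one_re]
    ring
  have hle : (n : ℝ) * (1 - q) ≤ n * (1 - y.re) := by
    gcongr
    exact (Complex.re_le_norm y).trans hy
  rw [hre]
  linarith

theorem one_le_norm_complexAffine (hn : 6 ≤ n * (1 - q)) (hy : ‖y‖ ≤ q) : 1 ≤ ‖complexAffine n y‖ :=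
  (one_le_re_complexAffine hn hy).trans (Complex.re_le_norm _)

theorem norm_complexRatio_le (hn : 6 ≤ n * (1 - q)) (hy : ‖y‖ ≤ q) :
    ‖complexRatio n y‖ ≤ 1 / 4 := by
  have hA : 1 ≤ ‖complexAffine n y‖ ^ 2 := one_le_pow₀ (one_le_norm_complexAffine hn hy)
  have hq : q ≤ 1 := by
    by_contra! hq
    nlinarith [(n.cast_nonneg : (0 : ℝ) ≤ n)]
  have hpow : ‖y‖ ^ n ≤ 1 := pow_le_one₀ (norm_nonneg y) (hy.trans hq)
  rw [complexRatio, norm_div, norm_mul, norm_pow, norm_pow, Complex.norm_ofNat,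
    div_le_iff₀ (by positivity)]
  linarith

theorem norm_complexDefect_le (hn : 6 ≤ n * (1 - q)) (hy : ‖y‖ ≤ q) :
    ‖complexDefect n y‖ ≤ q ^ n := by
  have hA := one_le_norm_complexAffine hn hy
  have hA0 := (one_pos.trans_le hA).ne'
  calc ‖complexDefect n y‖ ≤ ‖complexAffine n y‖ * ‖complexRatio n y‖ := by
        rw [complexDefect, norm_mul]
        gcongr
        exact norm_one_sub_cpow_inv_two_le _
    _ = ‖y‖ ^ n / (4 * ‖complexAffine n y‖) := by
        rw [complexRatio, norm_div, norm_mul, norm_pow, norm_pow, Complex.norm_ofNat]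
        field_simp [hA0]
    _ ≤ ‖y‖ ^ n := div_le_self (by positivity) (by linarith)
    _ ≤ q ^ n := by gcongr

theorem differentiableAt_complexDefect (hn : 6 ≤ n * (1 - q)) (hy : ‖y‖ ≤ q) :
    DifferentiableAt ℂ (complexDefect n) y := by
  have hA0 : 4 * complexAffine n y ^ 2 ≠ 0 := by
    have := norm_pos_iff.mp (one_pos.trans_le (one_le_norm_complexAffine hn hy))
    simpa using this
  have hA : DifferentiableAt ℂ (complexAffine n) y := by
    unfold complexAffine
    fun_prop
  have hR : DifferentiableAt ℂ (complexRatio n) y := by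
    unfold complexRatio
    fun_prop (disch := assumption)
  have hslit : 1 - complexRatio n y ∈ Complex.slitPlane := by
    left
    have := (Complex.re_le_norm _).trans (norm_complexRatio_le hn hy)
    rw [Complex.sub_re, Complex.one_re]
    linarith
  unfold complexDefect
  fun_prop (disch := assumption)

end Disc

theorem complexDefect_cayleySq {q : ℝ} {n : ℕ} (hn : 6 ≤ n * (1 - q)) {x : ℝ} (hx : x + 1 ≠ 0)
    (hq : ‖cayleySq (x : ℂ)‖ ≤ q) : complexDefect n (cayleySq (x : ℂ)) = freqDefect n x := by
  have hA := one_le_re_complexAffine hn hq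
  have hR := norm_complexRatio_le hn hq
  set A : ℝ := n * OmG x - 1 / 2 with hAdef
  set w : ℝ := cayleySq x ^ n / (4 * A ^ 2) with hw
  have hAc : complexAffine n (cayleySq (x : ℂ)) = A := by
    rw [hAdef, OmG_eq_one_sub_cayleySq hx, complexAffine, ← ofReal_cayleySq]
    push_cast
    ring
  have hRc : complexRatio n (cayleySq (x : ℂ)) = w := by
    rw [complexRatio, hAc, ← ofReal_cayleySq]
    push_cast [hw]
    ring
  rw [hAc, Complex.ofReal_re] at hA
  rw [hRc, Complex.norm_real] at hR
  have hw1 : 0 ≤ 1 - w := by linarith [(le_abs_self w).trans hR]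
  have hsqrt : (1 - (w : ℂ)) ^ (2⁻¹ : ℂ) = (√(1 - w) : ℝ) := by
    rw [Real.sqrt_eq_rpow, Complex.ofReal_cpow hw1]
    push_cast
    norm_num
  have hOm : Om n x = A * √(1 - w) := by
    have hprod : muP n x * muM n x = A ^ 2 * (1 - w) := by
      have hA0 : A ≠ 0 := by linarith
      rw [muP_mul_muM, ← hAdef, hw]
      field_simp
    rw [Om, hprod, Real.sqrt_mul (sq_nonneg A), Real.sqrt_sq (by linarith)]
  rw [complexDefect, hAc, hRc, hsqrt, freqDefect, hOm, ← hAdef]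
  push_cast
  ring

theorem abs_iteratedDeriv_freqDefect_le {γ₂ : ℝ} {γ : ℝ} (hγ : γ ∈ Set.Icc 1 γ₂) {n : ℕ}
    (hn : 3 * (γ₂ + 2) ^ 2 ≤ n) (k : ℕ) :
    |iteratedDeriv k (freqDefect n) γ| ≤
      k.factorial * (1 - 2 / (γ₂ + 2) ^ 2) ^ n / (1 / 2) ^ k := by
  have hγ₂ : 0 < γ₂ + 2 := by linarith [hγ.1, hγ.2]
  have hn6 : 6 ≤ n * (1 - (1 - 2 / (γ₂ + 2) ^ 2)) := by
    rw [sub_sub_cancel, mul_div_assoc', le_div_iff₀ (by positivity)]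
    linarith
  refine abs_iteratedDeriv_le_of_eventuallyEq_re (F := fun z => complexDefect n (cayleySq z))
    one_half_pos (fun z hz => ?_) (fun z hz => ?_) ?_ k
  · obtain ⟨hz1, hzq⟩ := norm_cayleySq_le hγ hz
    have hcayley : DifferentiableAt ℂ cayleySq z := by
      unfold cayleySq
      fun_prop (disch := assumption)
    exact ((differentiableAt_complexDefect hn6 hzq).comp z hcayley).differentiableWithinAt
  · exact norm_complexDefect_le hn6 (norm_cayleySq_le hγ (Metric.sphere_subset_closedBall hz)).2
  · filter_upwards [Complex.continuous_ofReal.continuousAt.preimage_mem_nhds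
      (Metric.closedBall_mem_nhds (γ : ℂ) one_half_pos)] with x hx
    obtain ⟨hx1, hxq⟩ := norm_cayleySq_le hγ hx
    rw [complexDefect_cayleySq hn6 (by exact_mod_cast hx1) hxq, Complex.ofReal_re]

theorem eventually_mul_abs_iteratedDeriv_freqDefect_le {γ₂ : ℝ} (hγ₂ : 1 ≤ γ₂) (k₀ : ℕ) {ε : ℝ}
    (hε : 0 < ε) :
    ∀ᶠ n : ℕ in atTop, ∀ γ ∈ Set.Icc 1 γ₂, ∀ k ≤ k₀,
      (n + 2) * |iteratedDeriv k (freqDefect n) γ| ≤ ε := by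
  set q : ℝ := 1 - 2 / (γ₂ + 2) ^ 2 with hq
  have hq1 : q < 1 := sub_lt_self _ (by positivity)
  have hq0 : 0 ≤ q := by
    rw [hq, sub_nonneg, div_le_one (by positivity)]
    nlinarith
  have hlim : Tendsto (fun n : ℕ => k₀.factorial * 2 ^ k₀ * (n * q ^ n + 2 * q ^ n)) atTop
      (𝓝 (k₀.factorial * 2 ^ k₀ * (0 + 2 * 0))) :=
    ((tendsto_self_mul_const_pow_of_lt_one hq0 hq1).add
      ((tendsto_pow_atTop_nhds_zero_of_lt_one hq0 hq1).const_mul 2)).const_mul _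
  rw [mul_zero, add_zero, mul_zero] at hlim
  filter_upwards [hlim.eventually_le_const hε, eventually_ge_atTop ⌈3 * (γ₂ + 2) ^ 2⌉₊]
    with n hnε hn γ hγ k hk
  calc (n + 2) * |iteratedDeriv k (freqDefect n) γ|
      ≤ (n + 2) * (k.factorial * q ^ n / (1 / 2) ^ k) := by
        gcongr
        exact abs_iteratedDeriv_freqDefect_le hγ (Nat.ceil_le.mp hn) k
    _ = k.factorial * 2 ^ k * (n * q ^ n + 2 * q ^ n) := by
        rw [one_div, inv_pow, div_inv_eq_mul]
        ring
    _ ≤ k₀.factorial * 2 ^ k₀ * (n * q ^ n + 2 * q ^ n) := by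
        gcongr
        exact one_le_two
    _ ≤ ε := hnε

end ComplexDefect

section Transversality

open Filter Topology

/-- The integer combination of the frequencies `Ω_n` with coefficients `c n`. -/
noncomputable def freqSum (c : ℕ →₀ ℤ) (x : ℝ) : ℝ := c.sum fun n j => j * Om n x

theorem freqSum_add (c c' : ℕ →₀ ℤ) (x : ℝ) :
    freqSum (c + c') x = freqSum c x + freqSum c' x :=
  Finsupp.sum_add_index' (by simp) fun n j j' => by push_cast; ring

theorem freqSum_single (n : ℕ) (j : ℤ) (x : ℝ) : freqSum (.single n j) x = j * Om n x :=
  Finsupp.sum_single_index (by simp)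

theorem freqSum_mapDomain {ι : Type*} [Fintype ι] (S : ι → ℕ) (ℓ : ι →₀ ℤ) (x : ℝ) :
    freqSum (ℓ.mapDomain S) x = ∑ i, ℓ i * Om (S i) x := by
  rw [freqSum, Finsupp.sum_mapDomain_index (by simp) fun n j j' => by push_cast; ring,
    Finsupp.sum_fintype _ _ (by simp)]

theorem Om_eq_mul_Om_one_sub {x : ℝ} (hx : 0 < x) (n : ℕ) :
    Om n x = n * Om 1 x - (1 / 2 + freqDefect n x) := by
  rw [freqDefect, Om_one hx]
  ring

theorem freqSum_eq (c : ℕ →₀ ℤ) (F : Finset ℕ) {x : ℝ} (hx : 0 < x) :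
    freqSum c x =
      (-(∑ n ∈ (c.support \ F).erase 1, (c n : ℝ)) / 2
        + (∑ n ∈ c.support \ F, n * (c n : ℝ)) * Om 1 x + ∑ n ∈ F, c n * Om n x)
        - ∑ n ∈ (c.support \ F).erase 1, c n * freqDefect n x := by
  have hsplit : freqSum c x = ∑ n ∈ F, c n * Om n x + ∑ n ∈ c.support \ F, c n * Om n x := by
    rw [← Finset.sum_union Finset.disjoint_sdiff, Finset.union_sdiff_self_eq_union]
    exact Finsupp.sum_of_support_subset _ Finset.subset_union_right _ (by simp)
  have hone : (c 1 : ℝ) * (1 / 2 + freqDefect 1 x) = 0 := by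
    rw [freqDefect, Om_one hx]
    push_cast
    ring
  have hfar : ∑ n ∈ c.support \ F, c n * Om n x =
      (∑ n ∈ c.support \ F, n * (c n : ℝ)) * Om 1 x
        - ∑ n ∈ (c.support \ F).erase 1, c n * (1 / 2 + freqDefect n x) := by
    rw [Finset.sum_erase (a := 1) _ hone, Finset.sum_mul, ← Finset.sum_sub_distrib]
    exact Finset.sum_congr rfl fun n _ => by rw [Om_eq_mul_Om_one_sub hx n]; ring
  rw [hsplit, hfar]
  simp only [mul_add, Finset.sum_add_distrib, ← Finset.sum_mul]
  ring

theorem abs_le_abs_mul_add_mul_add {n n' : ℕ} (hne : n ≠ n') (a b : ℝ) :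
    |a| ≤ |n * a + n' * b| + (n + 1) * |a + b| := by
  have hgap : (1 : ℝ) ≤ |(n' : ℝ) - n| := by
    exact_mod_cast Int.one_le_abs (sub_ne_zero.mpr (Nat.cast_injective.ne hne.symm))
  have hb : |b| ≤ |n * a + n' * b| + n * |a + b| :=
    calc |b| ≤ |(n' : ℝ) - n| * |b| := le_mul_of_one_le_left (abs_nonneg _) hgap
      _ = |(n * a + n' * b) - n * (a + b)| := by
        rw [← abs_mul]
        ring_nf
      _ ≤ |n * a + n' * b| + n * |a + b| := by simpa [abs_mul] using abs_sub _ (n * (a + b))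
  calc |a| = |(a + b) - b| := by rw [add_sub_cancel_right]
    _ ≤ |a + b| + |b| := abs_sub _ _
    _ ≤ |n * a + n' * b| + (n + 1) * |a + b| := by linarith

theorem abs_coeff_le_of_card_le_two {G : Finset ℕ} (hG : G.card ≤ 2) (c : ℕ → ℝ) {n : ℕ}
    (hn : n ∈ G.erase 1) :
    |c n| ≤ |∑ m ∈ G, m * c m| + (n + 1) * |∑ m ∈ G.erase 1, c m| := by
  by_cases hsing : G.erase 1 = {n}
  · rw [hsing, Finset.sum_singleton]
    nlinarith [abs_nonneg (∑ m ∈ G, m * c m), abs_nonneg (c n), (n.cast_nonneg : (0 : ℝ) ≤ n)]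
  obtain ⟨n', hn', hne⟩ : ∃ n' ∈ G.erase 1, n' ≠ n := by
    by_contra! h
    exact hsing (Finset.eq_singleton_iff_unique_mem.mpr ⟨hn, h⟩)
  have hpair : {n, n'} = G.erase 1 := Finset.eq_of_subset_of_card_le
    (Finset.insert_subset hn (Finset.singleton_subset_iff.mpr hn'))
    (by rw [Finset.card_pair hne.symm]; exact (Finset.card_erase_le).trans hG)
  have hGeq : G.erase 1 = G := Finset.eq_of_subset_of_card_le (Finset.erase_subset _ _)
    (by rw [← hpair, Finset.card_pair hne.symm]; exact hG)
  rw [hGeq, ← hGeq, ← hpair, Finset.sum_pair hne.symm, Finset.sum_pair hne.symm]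
  exact abs_le_abs_mul_add_mul_add hne.symm _ _

theorem abs_sum_mul_le_of_card_le_two {G : Finset ℕ} (hG : G.card ≤ 2) {c e : ℕ → ℝ} {B ε : ℝ}
    (hv : |∑ m ∈ G, m * c m| ≤ B) (hw : |∑ m ∈ G.erase 1, c m| ≤ B) (hε : 0 ≤ ε)
    (he : ∀ n ∈ G.erase 1, (n + 2) * |e n| ≤ ε) :
    |∑ n ∈ G.erase 1, c n * e n| ≤ 2 * (B * ε) := by
  have hB : 0 ≤ B := (abs_nonneg _).trans hv
  have hterm : ∀ n ∈ G.erase 1, |c n * e n| ≤ B * ε := fun n hn =>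
    calc |c n * e n| = |c n| * |e n| := abs_mul _ _
      _ ≤ (B + (n + 1) * B) * |e n| := by
        gcongr
        exact (abs_coeff_le_of_card_le_two hG c hn).trans (by gcongr)
      _ = B * ((n + 2) * |e n|) := by ring
      _ ≤ B * ε := by
        gcongr
        exact he n hn
  calc |∑ n ∈ G.erase 1, c n * e n| ≤ (G.erase 1).card • (B * ε) :=
        (Finset.abs_sum_le_sum_abs _ _).trans (Finset.sum_le_card_nsmul _ _ _ hterm)
    _ ≤ 2 * (B * ε) := by
        rw [nsmul_eq_mul]
        gcongr
        exact_mod_cast Finset.card_erase_le.trans hG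

theorem exists_ne_zero_of_card_le_two {c : ℕ →₀ ℤ} (hc : c ≠ 0) {F : Finset ℕ}
    (hcard : (c.support \ F).card ≤ 2) :
    ∑ n ∈ c.support \ F, n * c n ≠ 0 ∨ ∑ n ∈ (c.support \ F).erase 1, c n ≠ 0 ∨
      ∃ n ∈ F, c n ≠ 0 := by
  by_contra! ⟨hv, hw, hF⟩
  have hfar : ∀ n ∈ (c.support \ F).erase 1, c n = 0 := fun n hn => by
    have hle := abs_coeff_le_of_card_le_two hcard (fun n => (c n : ℝ)) hn
    rw [show ∑ m ∈ c.support \ F, m * (c m : ℝ) = 0 by exact_mod_cast hv,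
      show ∑ m ∈ (c.support \ F).erase 1, (c m : ℝ) = 0 by exact_mod_cast hw] at hle
    simpa using hle
  have hone : c 1 = 0 := by
    rw [Finset.sum_eq_single 1] at hv
    · simpa using hv
    · exact fun n hn hn1 => by rw [hfar n (Finset.mem_erase.mpr ⟨hn1, hn⟩), mul_zero]
    · intro h1
      by_contra hne
      exact h1 (Finset.mem_sdiff.mpr ⟨by simpa using hne, fun h => hne (by simp [hF 1 h])⟩)
  refine hc (Finsupp.ext fun n => ?_)
  by_contra hne
  refine hne (hfar n (Finset.mem_erase.mpr ⟨?_, Finset.mem_sdiff.mpr ⟨?_, ?_⟩⟩))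
  · rintro rfl
    exact hne hone
  · simpa using hne
  · exact fun hn => hne (hF n hn)

theorem le_abs_sub_of_coeff_le {c : ℕ →₀ ℤ} (hc : c ≠ 0) {F : Finset ℕ}
    (hcard : (c.support \ F).card ≤ 2) {ρ a : ℝ} (hρ : 0 < ρ) {e : ℕ → ℝ}
    (hw : ρ * |-(∑ n ∈ (c.support \ F).erase 1, (c n : ℝ)) / 2| ≤ |a|)
    (hv : ρ * |∑ n ∈ c.support \ F, n * (c n : ℝ)| ≤ |a|) (hF : ∀ n ∈ F, ρ * |(c n : ℝ)| ≤ |a|)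
    (he : ∀ n ∈ (c.support \ F).erase 1, (n + 2) * |e n| ≤ ρ / 8) :
    let D := |a - ∑ n ∈ (c.support \ F).erase 1, c n * e n|
    ρ / 4 ≤ D ∧ ∀ n ∈ F, ρ / 4 * |(c n : ℝ)| ≤ D := by
  intro D
  rw [abs_div, abs_neg, Nat.abs_ofNat] at hw
  have herror : |∑ n ∈ (c.support \ F).erase 1, c n * e n| ≤ |a| / 2 := by
    refine (abs_sum_mul_le_of_card_le_two hcard (B := 2 * |a| / ρ) (ε := ρ / 8)
      ?_ ?_ (by positivity) he).trans_eq (by field_simp; ring)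
    · rw [le_div_iff₀ hρ]
      linarith [abs_nonneg a]
    · rw [le_div_iff₀ hρ]
      linarith
  have hD : |a| / 2 ≤ D := by
    have : |a| - |∑ n ∈ (c.support \ F).erase 1, c n * e n| ≤ D := abs_sub_abs_le_abs_sub _ _
    linarith
  have hlarge : ∀ z : ℤ, z ≠ 0 → ρ ≤ ρ * |(z : ℝ)| := fun z hz =>
    le_mul_of_one_le_right hρ.le (by exact_mod_cast Int.one_le_abs hz)
  refine ⟨?_, fun n hn => by linarith [hF n hn, abs_nonneg a]⟩
  rcases exists_ne_zero_of_card_le_two hc hcard with h | h | ⟨n, hn, h⟩ <;>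
    have hz := hlarge _ h
  · push_cast at hz
    linarith
  · push_cast at hz
    linarith
  · linarith [hF n hn]

theorem iteratedDeriv_freqSum {N : ℕ} {γ₂ : ℝ} (hmu : 0 < muM N γ₂) {c : ℕ →₀ ℤ} {F : Finset ℕ}
    (hF : ∀ n ∈ F, N ≤ n) (hc : ∀ n ∈ (c.support \ F).erase 1, N ≤ n) {γ : ℝ}
    (hγ : γ ∈ Set.Icc 1 γ₂) (k : ℕ) :
    iteratedDeriv k (freqSum c) γ =
      iteratedDeriv k (fun x => -(∑ n ∈ (c.support \ F).erase 1, (c n : ℝ)) / 2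
        + (∑ n ∈ c.support \ F, n * (c n : ℝ)) * Om 1 x + ∑ n ∈ F, c n * Om n x) γ
      - ∑ n ∈ (c.support \ F).erase 1, c n * iteratedDeriv k (freqDefect n) γ := by
  have hγ0 : 0 < γ := one_pos.trans_le hγ.1
  have hOm : ∀ n, n = 1 ∨ N ≤ n → AnalyticAt ℝ (Om n) γ := fun n hn =>
    analyticOnNhd_Om hmu hn γ hγ
  have hmain : AnalyticAt ℝ (fun x => -(∑ n ∈ (c.support \ F).erase 1, (c n : ℝ)) / 2
      + (∑ n ∈ c.support \ F, n * (c n : ℝ)) * Om 1 x + ∑ n ∈ F, c n * Om n x) γ :=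
    (analyticAt_const.add (analyticAt_const.mul (hOm 1 (.inl rfl)))).add
      (Finset.analyticAt_fun_sum _ fun n hn => analyticAt_const.mul (hOm n (.inr (hF n hn))))
  have hdefect : ∀ n ∈ (c.support \ F).erase 1, AnalyticAt ℝ (freqDefect n) γ := fun n hn =>
    ((analyticAt_const.mul (analyticAt_OmG hγ0)).sub analyticAt_const).sub
      (hOm n (.inr (hc n hn)))
  have hsum : AnalyticAt ℝ
      (fun x => ∑ n ∈ (c.support \ F).erase 1, (c n : ℝ) * freqDefect n x) γ :=
    Finset.analyticAt_fun_sum _ fun n hn => analyticAt_const.mul (hdefect n hn)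
  have heq : freqSum c =ᶠ[𝓝 γ] _ := (eventually_gt_nhds hγ0).mono fun x => freqSum_eq c F
  rw [heq.iteratedDeriv_eq, iteratedDeriv_fun_sub hmain.contDiffAt hsum.contDiffAt,
    iteratedDeriv_sum_const_mul _ _ fun n hn => (hdefect n hn).contDiffAt]

theorem exists_mul_coeff_le_of_far {N : ℕ} {γ₂ : ℝ} (hγ₂ : 1 < γ₂) (hmu : 0 < muM N γ₂)
    {F : Finset ℕ} (hF : ∀ n ∈ F, N ≤ n) :
    ∃ k₀ T : ℕ, ∃ ρ > 0, ∀ γ ∈ Set.Icc 1 γ₂, ∀ c : ℕ →₀ ℤ, c ≠ 0 →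
      (∀ n ∈ c.support \ F, n = 1 ∨ T ≤ n) → (c.support \ F).card ≤ 2 → ∃ k ≤ k₀,
        let D := |iteratedDeriv k (freqSum c) γ|
        ρ ≤ D ∧ ∀ n ∈ F, ρ * |(c n : ℝ)| ≤ D := by
  obtain ⟨k₀, ρ, hρ, hnear⟩ := exists_mul_coeff_le_abs_iteratedDeriv hγ₂ hmu hF
  obtain ⟨T, hT⟩ := eventually_atTop.mp (eventually_mul_abs_iteratedDeriv_freqDefect_le hγ₂.le k₀
    (show 0 < ρ / 8 by positivity))
  refine ⟨k₀, max T N, ρ / 4, by positivity, fun γ hγ c hc hfar hcard => ?_⟩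
  have hge : ∀ n ∈ (c.support \ F).erase 1, max T N ≤ n := fun n hn =>
    (hfar n (Finset.mem_of_mem_erase hn)).resolve_left (Finset.ne_of_mem_erase hn)
  obtain ⟨k, hk, hw, hv, hcoeff⟩ := hnear γ hγ (-(∑ n ∈ (c.support \ F).erase 1, (c n : ℝ)) / 2)
    (∑ n ∈ c.support \ F, n * (c n : ℝ)) (fun n => c n)
  refine ⟨k, hk, ?_⟩
  rw [iteratedDeriv_freqSum hmu hF (fun n hn => (le_max_right _ _).trans (hge n hn)) hγ]
  exact le_abs_sub_of_coeff_le hc hcard hρ hw hv hcoeff fun n hn =>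
    hT n ((le_max_left _ _).trans (hge n hn)) γ hγ k hk

/- Induction on the number of indices outside `F`: if one of them is neither `1` nor far away, it
lies in a bounded window, and adding the window to `F` lowers that number. -/
theorem exists_mul_coeff_le_of_card_le {N : ℕ} {γ₂ : ℝ} (hγ₂ : 1 < γ₂) (hmu : 0 < muM N γ₂)
    {r : ℕ} (hr : r ≤ 2) {F : Finset ℕ} (hF : ∀ n ∈ F, N ≤ n) :
    ∃ k₀ : ℕ, ∃ ρ > 0, ∀ γ ∈ Set.Icc 1 γ₂, ∀ c : ℕ →₀ ℤ, c ≠ 0 →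
      (∀ n ∈ c.support, n = 1 ∨ N ≤ n) → (c.support \ F).card ≤ r → ∃ k ≤ k₀,
        let D := |iteratedDeriv k (freqSum c) γ|
        ρ ≤ D ∧ ∀ n ∈ F, ρ * |(c n : ℝ)| ≤ D := by
  induction r generalizing F with
  | zero =>
    obtain ⟨k₀, T, ρ, hρ, hfar⟩ := exists_mul_coeff_le_of_far hγ₂ hmu hF
    refine ⟨k₀, ρ, hρ, fun γ hγ c hc _ hcard => hfar γ hγ c hc ?_ (hcard.trans hr)⟩
    simp [Finset.card_eq_zero.mp (Nat.le_zero.mp hcard)]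
  | succ r ih =>
    obtain ⟨k₁, T, ρ₁, hρ₁, hfar⟩ := exists_mul_coeff_le_of_far hγ₂ hmu hF
    obtain ⟨k₂, ρ₂, hρ₂, hnear⟩ := ih (by lia) (F := F ∪ Finset.Ico N T) fun n hn =>
      (Finset.mem_union.mp hn).elim (hF n) fun h => (Finset.mem_Ico.mp h).1
    refine ⟨max k₁ k₂, min ρ₁ ρ₂, lt_min hρ₁ hρ₂, fun γ hγ c hc hN hcard => ?_⟩
    by_cases hT : ∀ n ∈ c.support \ F, n = 1 ∨ T ≤ n
    · obtain ⟨k, hk, hD, hcoeff⟩ := hfar γ hγ c hc hT (hcard.trans hr)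
      exact ⟨k, hk.trans (le_max_left _ _), (min_le_left _ _).trans hD, fun n hn =>
        (mul_le_mul_of_nonneg_right (min_le_left _ _) (abs_nonneg _)).trans (hcoeff n hn)⟩
    · push Not at hT
      obtain ⟨n₀, hn₀, hne, hlt⟩ := hT
      have hn₀N : N ≤ n₀ := (hN n₀ (Finset.mem_sdiff.mp hn₀).1).resolve_left hne
      have hsub : c.support \ (F ∪ Finset.Ico N T) ⊂ c.support \ F :=
        Finset.ssubset_iff_of_subset (Finset.sdiff_subset_sdiff subset_rfl Finset.subset_union_left)
          |>.mpr ⟨n₀, hn₀, by simp [hn₀N, hlt]⟩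
      obtain ⟨k, hk, hD, hcoeff⟩ := hnear γ hγ c hc hN
        (Nat.le_of_lt_succ ((Finset.card_lt_card hsub).trans_le hcard))
      exact ⟨k, hk.trans (le_max_right _ _), (min_le_right _ _).trans hD, fun n hn =>
        (mul_le_mul_of_nonneg_right (min_le_right _ _) (abs_nonneg _)).trans
          (hcoeff n (Finset.mem_union_left _ hn))⟩

theorem mul_brk_le {m : ℕ} {ℓ : Fin m → ℤ} {ρ D : ℝ} (hρ : 0 ≤ ρ) (h1 : ρ ≤ D)
    (h : ∀ i, ρ * |(ℓ i : ℝ)| ≤ D) : ρ * brk ℓ ≤ D := by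
  rw [brk, mul_max_of_nonneg _ _ hρ, mul_one]
  refine max_le h1 ?_
  obtain hem | hne := (Finset.univ : Finset (Fin m)).eq_empty_or_nonempty
  · rw [hem]
    simpa using hρ.trans h1
  · obtain ⟨i, -, hi⟩ := Finset.exists_mem_eq_sup _ hne fun i => (ℓ i).natAbs
    rw [hi, Nat.cast_natAbs, Int.cast_abs]
    exact h i

theorem transversality_general {N : ℕ} {γ₂ : ℝ} (hγ₂ : 1 < γ₂) (hmu : 0 < muM N γ₂) {m : ℕ}
    {S : Fin m → ℕ} (hS : S.Injective) (hSlow : ∀ i, N ≤ S i) :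
    ∃ (k₀ : ℕ) (ρ₀ : ℝ), 0 < ρ₀ ∧ ∀ γ ∈ Set.Icc 1 γ₂, ∀ (ℓ : Fin m → ℤ) (j j' : ℤ) (n n' : ℕ),
      (n = 1 ∨ N ≤ n) → (∀ i, S i ≠ n) → (n' = 1 ∨ N ≤ n') → (∀ i, S i ≠ n') →
      ¬(ℓ = 0 ∧ Finsupp.single n j + Finsupp.single n' j' = 0) →
      ∃ k ≤ k₀, ρ₀ * brk ℓ ≤ |iteratedDeriv k
        (fun x => (∑ i, (ℓ i : ℝ) * Om (S i) x) + j * Om n x + j' * Om n' x) γ| := by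
  obtain ⟨k₀, ρ, hρ, hbound⟩ := exists_mul_coeff_le_of_card_le hγ₂ hmu le_rfl
    (F := Finset.univ.image S) (by simpa using hSlow)
  refine ⟨k₀, ρ, hρ, fun γ hγ ℓ j j' n n' hn hSn hn' hSn' hne => ?_⟩
  let ℓ' : Fin m →₀ ℤ := Finsupp.equivFunOnFinite.symm ℓ
  let c : ℕ →₀ ℤ := ℓ'.mapDomain S + Finsupp.single n j + Finsupp.single n' j'
  have hsum : freqSum c = fun x => (∑ i, (ℓ i : ℝ) * Om (S i) x) + j * Om n x + j' * Om n' x :=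
    funext fun x => by
      rw [freqSum_add, freqSum_add, freqSum_mapDomain, freqSum_single, freqSum_single]
      rfl
  have hcS : ∀ i, c (S i) = ℓ i := fun i => by
    simp [c, ℓ', Finsupp.mapDomain_apply hS, hSn i, hSn' i]
  have hsupp : ∀ k ∈ c.support, (∃ i, S i = k) ∨ k = n ∨ k = n' := fun k hk => by
    contrapose! hk
    simp [c, Finsupp.mapDomain_of_notMem_range ℓ' k (by simpa using hk.1), hk.2.1.symm, hk.2.2.symm]
  have hc : c ≠ 0 := fun h => hne <| by
    have hℓ : ℓ = 0 := funext fun i => by rw [← hcS, h]; rfl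
    have hℓ' : ℓ' = 0 := Finsupp.ext fun i => congr_fun hℓ i
    exact ⟨hℓ, by simpa [c, hℓ', add_assoc] using h⟩
  obtain ⟨k, hk, hD, hcoeff⟩ := hbound γ hγ c hc
    (fun k hk => by
      rcases hsupp k hk with ⟨i, rfl⟩ | rfl | rfl
      exacts [.inr (hSlow i), hn, hn'])
    ((Finset.card_le_card fun k hk => by
      have := hsupp k (Finset.mem_sdiff.mp hk).1
      simp_all).trans (Finset.card_le_two (a := n) (b := n')))
  rw [hsum] at hD hcoeff
  exact ⟨k, hk, mul_brk_le hρ.le hD fun i =>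
    hcS i ▸ hcoeff (S i) (Finset.mem_image_of_mem S (Finset.mem_univ i))⟩

end Transversality

/-- Transversality of the linear frequencies (Proposition 5.4). -/
theorem transversality
    (nbar : ℕ) (hnbar : 2 ≤ nbar)
    (γ₁ γ₂ : ℝ) (hγ₁ : 1 < γ₁) (hγ₁₂ : γ₁ ≤ γ₂)
    (hmu : ∀ γ ∈ Set.Icc γ₁ γ₂, 0 < muM (nbar + 1) γ)
    (m : ℕ) (S : Fin m → ℕ) (hS : StrictMono S) (hSlow : ∀ i, nbar + 1 ≤ S i) :
    ∃ (k₀ : ℕ) (ρ₀ : ℝ), 0 < ρ₀ ∧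
      ∀ γ ∈ Set.Icc γ₁ γ₂,
        -- (a)
        (∀ ℓ : Fin m → ℤ, ℓ ≠ 0 →
          ∃ k ≤ k₀, ρ₀ * brk ℓ ≤
            |iteratedDeriv k (fun x => ∑ i, (ℓ i : ℝ) * Om (S i) x) γ|) ∧
        -- (b)
        (∀ (ℓ : Fin m → ℤ) (j : ℤ), ¬(ℓ = 0 ∧ j = 0) →
          ∃ k ≤ k₀, ρ₀ * brk ℓ ≤
            |iteratedDeriv k
              (fun x => (∑ i, (ℓ i : ℝ) * Om (S i) x) + (j : ℝ) * Om 1 x) γ|) ∧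
        -- (c)
        (∀ (ℓ : Fin m → ℤ) (n : ℕ), (n = 1 ∨ nbar + 1 ≤ n) → (∀ i, S i ≠ n) →
          ∃ k ≤ k₀, ρ₀ * brk ℓ ≤
            |iteratedDeriv k
              (fun x => (∑ i, (ℓ i : ℝ) * Om (S i) x) + Om n x) γ|) ∧
        -- (d)
        (∀ (ℓ : Fin m → ℤ) (n n' : ℕ),
          (n = 1 ∨ nbar + 1 ≤ n) → (∀ i, S i ≠ n) →
          (n' = 1 ∨ nbar + 1 ≤ n') → (∀ i, S i ≠ n') →
          ¬(ℓ = 0 ∧ n = n') →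
          ∃ k ≤ k₀, ρ₀ * brk ℓ ≤
            |iteratedDeriv k
              (fun x => (∑ i, (ℓ i : ℝ) * Om (S i) x) + Om n x - Om n' x) γ|) ∧
        -- (e)
        (∀ (ℓ : Fin m → ℤ) (n n' : ℕ),
          (n = 1 ∨ nbar + 1 ≤ n) → (∀ i, S i ≠ n) →
          (n' = 1 ∨ nbar + 1 ≤ n') → (∀ i, S i ≠ n') →
          ∃ k ≤ k₀, ρ₀ * brk ℓ ≤
            |iteratedDeriv k
              (fun x => (∑ i, (ℓ i : ℝ) * Om (S i) x) + Om n x + Om n' x) γ|) := by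
  have hmu₂ : 0 < muM (nbar + 1) γ₂ := hmu γ₂ (Set.right_mem_Icc.mpr hγ₁₂)
  have hS1 : ∀ i, S i ≠ 1 := fun i => by have := hSlow i; lia
  obtain ⟨k₀, ρ₀, hρ₀, h⟩ :=
    transversality_general (hγ₁.trans_le hγ₁₂) hmu₂ hS.injective hSlow
  refine ⟨k₀, ρ₀, hρ₀, fun γ hγ => ?_⟩
  replace h := h γ ⟨hγ₁.le.trans hγ.1, hγ.2⟩
  refine ⟨fun ℓ hℓ => ?_, fun ℓ j hne => ?_, fun ℓ n hn hSn => ?_,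
    fun ℓ n n' hn hSn hn' hSn' hne => ?_, fun ℓ n n' hn hSn hn' hSn' => ?_⟩
  · simpa using h ℓ 0 0 1 1 (.inl rfl) hS1 (.inl rfl) hS1 (by simpa using hℓ)
  · simpa using h ℓ j 0 1 1 (.inl rfl) hS1 (.inl rfl) hS1 (by simpa using hne)
  · simpa using h ℓ 1 0 n 1 hn hSn (.inl rfl) hS1 (by simp)
  · simpa [← sub_eq_add_neg] using h ℓ 1 (-1) n n' hn hSn hn' hSn' (by
      simpa [← sub_eq_add_neg, sub_eq_zero, Finsupp.single_left_inj] using hne)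
  · simpa using h ℓ 1 1 n n' hn hSn hn' hSn' fun hzero => by
      have hn1 := DFunLike.congr_fun hzero.2 n
      by_cases hnn' : n' = n <;> simp [hnn'] at hn1
end

section
/- (Critical aspect ratios, Lemma 4.1.) (i) For every n ≥ 1 and every γ > 1, μ_n^-(γ) < μ_{n+1}^-(γ). (ii) For each n ≥ 1 the function γ ↦ μ_n^-(γ) is strictly decreasing on (1,∞), with limit n/4 − 1/2 as γ → 1⁺ and limit −1 as γ → +∞. (iii) For each n ≥ 3 there exists a unique γ̲_n ∈ (1,∞) such that μ_n^-(γ̲_n) = 0; moreover μ_n^-(γ) > 0 for 1 < γ < γ̲_n, μ_n^-(γ) < 0 for γ > γ̲_n, γ̲₃ = 3, and γ̲_n < γ̲_{n+1} for all n ≥ 3. (iv) For every n ≥ 1 and γ > 1, μ_n^+(γ) > μ_n^-(γ) and μ_{n+1}^+(γ) > μ_n^+(γ). (v) For each n ≥ 3 the function γ ↦ μ_n^+(γ) is positive and strictly decreasing on (1,∞), with limit n/4 − 1/2 as γ → 1⁺ and limit 0 as γ → +∞. -/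
open Real Filter

/-! The Möbius map `t = (γ - 1) / (γ + 1)` carries `(1, ∞)` increasingly into `(0, 1)`, and in the
variable `t` one has `Ω = (1 - t²) / 4` and `κ_n = tⁿ`. Hence `μ_n^±` become the polynomials
`n (1 - t²) / 4 - 1 / 2 ± tⁿ / 2`, whose values at `0` and `1` are the two limits. Their derivatives
`n (± tⁿ⁻¹ - t) / 2` are negative on `(0, 1)`, for the sign `+` as soon as `n ≥ 3`, and their
increments in `n` factor as `(1 - t) ((1 + t) / 4 ∓ tⁿ / 2)`. Finally `μ_{n+1}^-` is still positive
at the zero of `μ_n^-`, so its own zero lies further to the right. -/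

open Set Topology

/-- The variable `t = (γ - 1) / (γ + 1)` in which `Ω_γ` and `κ_n(γ)` are polynomials. -/
noncomputable def aspectParam (γ : ℝ) : ℝ := (γ - 1) / (γ + 1)

theorem aspectParam_eq_one_sub {γ : ℝ} (hγ : γ ≠ -1) : aspectParam γ = 1 - 2 / (γ + 1) := by
  have : γ + 1 ≠ 0 := fun h => hγ (eq_neg_of_add_eq_zero_left h)
  rw [aspectParam]
  field_simp
  ring

theorem strictMonoOn_aspectParam : StrictMonoOn aspectParam (Ioi (-1)) := by
  intro a (ha : -1 < a) b (hb : -1 < b) hab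
  rw [aspectParam_eq_one_sub ha.ne', aspectParam_eq_one_sub hb.ne']
  have : 0 < a + 1 := by linarith
  gcongr

theorem aspectParam_mem_Ioo {γ : ℝ} (hγ : 1 < γ) : aspectParam γ ∈ Ioo 0 1 :=
  ⟨div_pos (by linarith) (by linarith), (div_lt_one (by linarith)).2 (by linarith)⟩

theorem continuousAt_aspectParam {γ : ℝ} (hγ : γ ≠ -1) : ContinuousAt aspectParam γ :=
  ContinuousAt.div (by fun_prop) (by fun_prop) fun h => hγ (eq_neg_of_add_eq_zero_left h)

theorem tendsto_aspectParam_one : Tendsto aspectParam (𝓝 1) (𝓝 0) := by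
  simpa [aspectParam] using (continuousAt_aspectParam (γ := 1) (by norm_num)).tendsto

theorem tendsto_aspectParam_atTop : Tendsto aspectParam atTop (𝓝 1) := by
  have h : Tendsto (fun γ : ℝ => 1 - 2 / (γ + 1)) atTop (𝓝 (1 - 0)) :=
    tendsto_const_nhds.sub
      (tendsto_const_nhds.div_atTop (tendsto_atTop_add_const_right _ _ tendsto_id))
  rw [sub_zero] at h
  refine h.congr' ?_
  filter_upwards [eventually_ne_atTop (-1)] with γ hγ using (aspectParam_eq_one_sub hγ).symm

section Transfer

variable {α : Type*} {f p : ℝ → α}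

theorem strictAntiOn_of_eqOn_comp_aspectParam [Preorder α]
    (hf : EqOn f (p ∘ aspectParam) (Ioi 1)) (hp : StrictAntiOn p (Ioo 0 1)) :
    StrictAntiOn f (Ioi 1) :=
  (hp.comp_strictMonoOn (strictMonoOn_aspectParam.mono (Ioi_subset_Ioi (by norm_num)))
    fun _ => aspectParam_mem_Ioo).congr hf.symm

variable [TopologicalSpace α]

theorem continuousOn_of_eqOn_comp_aspectParam
    (hf : EqOn f (p ∘ aspectParam) (Ioi 1)) (hp : ContinuousOn p (Ioo 0 1)) :
    ContinuousOn f (Ioi 1) := by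
  have haspect : ContinuousOn aspectParam (Ioi 1) := fun γ (hγ : 1 < γ) =>
    (continuousAt_aspectParam (by linarith)).continuousWithinAt
  exact (hp.comp haspect fun _ => aspectParam_mem_Ioo).congr hf

theorem tendsto_one_of_eqOn_comp_aspectParam
    (hf : EqOn f (p ∘ aspectParam) (Ioi 1)) (hp : ContinuousAt p 0) :
    Tendsto f (𝓝[>] 1) (𝓝 (p 0)) :=
  (hp.tendsto.comp (tendsto_aspectParam_one.mono_left nhdsWithin_le_nhds)).congr'
    (hf.symm.eventuallyEq_of_mem self_mem_nhdsWithin)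

theorem tendsto_atTop_of_eqOn_comp_aspectParam
    (hf : EqOn f (p ∘ aspectParam) (Ioi 1)) (hp : ContinuousAt p 1) :
    Tendsto f atTop (𝓝 (p 1)) :=
  (hp.tendsto.comp tendsto_aspectParam_atTop).congr'
    (hf.symm.eventuallyEq_of_mem (Ioi_mem_atTop 1))

end Transfer

/-- The polynomial `n (1 - t²) / 4 - 1 / 2 + c tⁿ / 2`: for `c = ±1` it is `μ_n^±` in the variable
`t = aspectParam γ`. -/
noncomputable def muProfile (c : ℝ) (n : ℕ) (t : ℝ) : ℝ :=
  n * ((1 - t ^ 2) / 4) - 1 / 2 + c * t ^ n / 2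

section Profile

variable {c t : ℝ} {n : ℕ}

theorem continuous_muProfile (c : ℝ) (n : ℕ) : Continuous (muProfile c n) := by
  unfold muProfile
  fun_prop

theorem muProfile_zero (c : ℝ) (hn : n ≠ 0) : muProfile c n 0 = n / 4 - 1 / 2 := by
  simp [muProfile, hn, div_eq_mul_inv]

theorem muProfile_one (c : ℝ) (n : ℕ) : muProfile c n 1 = (c - 1) / 2 := by
  simp only [muProfile, one_pow]
  ring

theorem hasDerivAt_muProfile (c : ℝ) (n : ℕ) (t : ℝ) :
    HasDerivAt (muProfile c n) (n / 2 * (c * t ^ (n - 1) - t)) t := by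
  have hquad := (((hasDerivAt_pow 2 t).const_sub 1).div_const 4).const_mul (n : ℝ)
  have hpow := ((hasDerivAt_pow n t).const_mul c).div_const 2
  refine ((hquad.sub_const (1 / 2)).add hpow).congr_deriv ?_
  norm_num
  ring

theorem strictAntiOn_muProfile (hn : n ≠ 0) (h : ∀ t ∈ Ioo (0 : ℝ) 1, c * t ^ (n - 1) < t) :
    StrictAntiOn (muProfile c n) (Icc 0 1) := by
  refine strictAntiOn_of_deriv_neg (convex_Icc 0 1) (continuous_muProfile c n).continuousOn ?_
  intro t ht
  rw [interior_Icc] at ht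
  rw [(hasDerivAt_muProfile c n t).deriv]
  exact mul_neg_of_pos_of_neg (by positivity) (sub_neg.2 (h t ht))

theorem strictAntiOn_muProfile_of_nonpos (hc : c ≤ 0) (hn : n ≠ 0) :
    StrictAntiOn (muProfile c n) (Icc 0 1) :=
  strictAntiOn_muProfile hn fun _ ht =>
    (mul_nonpos_of_nonpos_of_nonneg hc (pow_nonneg ht.1.le _)).trans_lt ht.1

theorem strictAntiOn_muProfile_of_le_one (hc : c ≤ 1) (hn : 3 ≤ n) :
    StrictAntiOn (muProfile c n) (Icc 0 1) :=
  strictAntiOn_muProfile (by omega) fun _ ht =>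
    (mul_le_of_le_one_left (pow_nonneg ht.1.le _) hc).trans_lt
      (pow_lt_self_of_lt_one₀ ht.1 ht.2 (by omega))

theorem muProfile_succ_sub (c : ℝ) (n : ℕ) (t : ℝ) :
    muProfile c (n + 1) t - muProfile c n t = (1 - t) * ((1 + t) / 4 - c * t ^ n / 2) := by
  simp only [muProfile]
  push_cast
  ring

theorem muProfile_lt_muProfile_succ (hc : c ≤ 1) (hn : n ≠ 0) (ht : t ∈ Ioo 0 1) :
    muProfile c n t < muProfile c (n + 1) t := by
  obtain ⟨ht₀, ht₁⟩ := ht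
  have hpow : c * t ^ n ≤ t :=
    (mul_le_of_le_one_left (by positivity) hc).trans (pow_le_of_le_one ht₀.le ht₁.le hn)
  rw [← sub_pos, muProfile_succ_sub]
  exact mul_pos (by linarith) (by linarith)

end Profile

theorem OmG_eq {γ : ℝ} (hγ : γ ≠ -1) : OmG γ = (1 - aspectParam γ ^ 2) / 4 := by
  have h : γ + 1 ≠ 0 := fun h => hγ (eq_neg_of_add_eq_zero_left h)
  rw [OmG, aspectParam, add_comm 1 γ]
  field_simp
  ring

theorem eqOn_muP (n : ℕ) : EqOn (muP n) (muProfile 1 n ∘ aspectParam) (Ioi 1) := by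
  intro γ (hγ : 1 < γ)
  simp only [muP, OmG_eq (show γ ≠ -1 by linarith), kap, Function.comp_apply, muProfile,
    aspectParam, one_mul]

theorem eqOn_muM (n : ℕ) : EqOn (muM n) (muProfile (-1) n ∘ aspectParam) (Ioi 1) := by
  intro γ (hγ : 1 < γ)
  simp only [muM, OmG_eq (show γ ≠ -1 by linarith), kap, Function.comp_apply, muProfile,
    aspectParam, neg_one_mul, neg_div, sub_eq_add_neg]

section Branches

variable {n : ℕ} {γ : ℝ}

theorem muM_lt_muP (n : ℕ) (hγ : 1 < γ) : muM n γ < muP n γ := by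
  have : 0 < kap n γ := pow_pos (aspectParam_mem_Ioo hγ).1 n
  unfold muM muP
  linarith

theorem muM_lt_muM_succ (hn : n ≠ 0) (hγ : 1 < γ) : muM n γ < muM (n + 1) γ := by
  rw [eqOn_muM n hγ, eqOn_muM (n + 1) hγ]
  exact muProfile_lt_muProfile_succ (by norm_num) hn (aspectParam_mem_Ioo hγ)

theorem muP_lt_muP_succ (hn : n ≠ 0) (hγ : 1 < γ) : muP n γ < muP (n + 1) γ := by
  rw [eqOn_muP n hγ, eqOn_muP (n + 1) hγ]
  exact muProfile_lt_muProfile_succ le_rfl hn (aspectParam_mem_Ioo hγ)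

theorem strictAntiOn_muM (hn : n ≠ 0) : StrictAntiOn (muM n) (Ioi 1) :=
  strictAntiOn_of_eqOn_comp_aspectParam (eqOn_muM n)
    ((strictAntiOn_muProfile_of_nonpos (by norm_num) hn).mono Ioo_subset_Icc_self)

theorem strictAntiOn_muP (hn : 3 ≤ n) : StrictAntiOn (muP n) (Ioi 1) :=
  strictAntiOn_of_eqOn_comp_aspectParam (eqOn_muP n)
    ((strictAntiOn_muProfile_of_le_one le_rfl hn).mono Ioo_subset_Icc_self)

theorem tendsto_muM_one (hn : n ≠ 0) : Tendsto (muM n) (𝓝[>] 1) (𝓝 (n / 4 - 1 / 2)) :=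
  muProfile_zero (-1) hn ▸
    tendsto_one_of_eqOn_comp_aspectParam (eqOn_muM n) (continuous_muProfile _ _).continuousAt

theorem tendsto_muP_one (hn : n ≠ 0) : Tendsto (muP n) (𝓝[>] 1) (𝓝 (n / 4 - 1 / 2)) :=
  muProfile_zero 1 hn ▸
    tendsto_one_of_eqOn_comp_aspectParam (eqOn_muP n) (continuous_muProfile _ _).continuousAt

theorem tendsto_muM_atTop (n : ℕ) : Tendsto (muM n) atTop (𝓝 (-1)) := by
  have hone : muProfile (-1) n 1 = -1 := by norm_num [muProfile_one]
  exact hone ▸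
    tendsto_atTop_of_eqOn_comp_aspectParam (eqOn_muM n) (continuous_muProfile _ _).continuousAt

theorem tendsto_muP_atTop (n : ℕ) : Tendsto (muP n) atTop (𝓝 0) := by
  have hone : muProfile 1 n 1 = 0 := by norm_num [muProfile_one]
  exact hone ▸
    tendsto_atTop_of_eqOn_comp_aspectParam (eqOn_muP n) (continuous_muProfile _ _).continuousAt

theorem muP_pos (hn : 3 ≤ n) (hγ : 1 < γ) : 0 < muP n γ := by
  have ht := aspectParam_mem_Ioo hγ
  calc
    0 = muProfile 1 n 1 := by norm_num [muProfile_one]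
    _ < muProfile 1 n (aspectParam γ) :=
      strictAntiOn_muProfile_of_le_one le_rfl hn (Ioo_subset_Icc_self ht)
        (right_mem_Icc.2 zero_le_one) ht.2
    _ = muP n γ := (eqOn_muP n hγ).symm

theorem exists_muM_eq_zero (hn : 3 ≤ n) : ∃ γ ∈ Ioi 1, muM n γ = 0 := by
  have hcont : ContinuousOn (muM n) (Ioi 1) :=
    continuousOn_of_eqOn_comp_aspectParam (eqOn_muM n) (continuous_muProfile _ _).continuousOn
  have hn' : (3 : ℝ) ≤ n := by exact_mod_cast hn
  exact isPreconnected_Ioi.intermediate_value_Ioo (le_principal_iff.2 (Ioi_mem_atTop 1))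
    (le_principal_iff.2 self_mem_nhdsWithin) hcont (tendsto_muM_atTop n)
    (tendsto_muM_one (by omega)) ⟨by norm_num, by linarith⟩

end Branches

/-- The critical aspect ratio `γ̲_n`, the zero of `μ_n^-` on `(1, ∞)`. For `n < 3` there is no such
zero and the value is arbitrary. -/
noncomputable def criticalAspectRatio (n : ℕ) : ℝ := Function.invFunOn (muM n) (Ioi 1) 0

section Critical

variable {n : ℕ} {γ : ℝ}

theorem one_lt_criticalAspectRatio (hn : 3 ≤ n) : 1 < criticalAspectRatio n :=
  Function.invFunOn_mem (exists_muM_eq_zero hn)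

theorem muM_criticalAspectRatio (hn : 3 ≤ n) : muM n (criticalAspectRatio n) = 0 :=
  Function.invFunOn_eq (exists_muM_eq_zero hn)

theorem muM_pos_iff (hn : 3 ≤ n) (hγ : 1 < γ) : 0 < muM n γ ↔ γ < criticalAspectRatio n := by
  rw [← muM_criticalAspectRatio hn]
  exact (strictAntiOn_muM (by omega)).lt_iff_gt (one_lt_criticalAspectRatio hn) hγ

theorem muM_neg_iff (hn : 3 ≤ n) (hγ : 1 < γ) : muM n γ < 0 ↔ criticalAspectRatio n < γ := by
  rw [← muM_criticalAspectRatio hn]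
  exact (strictAntiOn_muM (by omega)).lt_iff_gt hγ (one_lt_criticalAspectRatio hn)

theorem muM_eq_zero_iff (hn : 3 ≤ n) (hγ : 1 < γ) : muM n γ = 0 ↔ γ = criticalAspectRatio n := by
  rw [← muM_criticalAspectRatio hn]
  exact (strictAntiOn_muM (by omega)).injOn.eq_iff hγ (one_lt_criticalAspectRatio hn)

theorem criticalAspectRatio_three : criticalAspectRatio 3 = 3 := by
  have hzero : muM 3 3 = 0 := by norm_num [muM, OmG, kap]
  exact ((muM_eq_zero_iff le_rfl (by norm_num)).1 hzero).symm

theorem criticalAspectRatio_lt_succ (hn : 3 ≤ n) :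
    criticalAspectRatio n < criticalAspectRatio (n + 1) := by
  have hone := one_lt_criticalAspectRatio hn
  rw [← muM_pos_iff (by omega) hone, ← muM_criticalAspectRatio hn]
  exact muM_lt_muM_succ (by omega) hone

end Critical

/-- Critical aspect ratios (Lemma 4.1). -/
theorem critical_aspect_ratios :
    -- (i)
    (∀ n : ℕ, 1 ≤ n → ∀ γ : ℝ, 1 < γ → muM n γ < muM (n + 1) γ) ∧
    -- (ii)
    (∀ n : ℕ, 1 ≤ n →
      StrictAntiOn (muM n) (Set.Ioi 1) ∧
      Tendsto (muM n) (nhdsWithin (1 : ℝ) (Set.Ioi 1)) (nhds ((n : ℝ) / 4 - 1 / 2)) ∧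
      Tendsto (muM n) atTop (nhds (-1))) ∧
    -- (iii)
    (∃ g : ℕ → ℝ,
      (∀ n : ℕ, 3 ≤ n →
        1 < g n ∧ muM n (g n) = 0 ∧
        (∀ γ : ℝ, 1 < γ → γ < g n → 0 < muM n γ) ∧
        (∀ γ : ℝ, g n < γ → muM n γ < 0) ∧
        (∀ γ : ℝ, 1 < γ → muM n γ = 0 → γ = g n)) ∧
      g 3 = 3 ∧
      (∀ n : ℕ, 3 ≤ n → g n < g (n + 1))) ∧
    -- (iv)
    (∀ n : ℕ, 1 ≤ n → ∀ γ : ℝ, 1 < γ →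
      muM n γ < muP n γ ∧ muP n γ < muP (n + 1) γ) ∧
    -- (v)
    (∀ n : ℕ, 3 ≤ n →
      (∀ γ : ℝ, 1 < γ → 0 < muP n γ) ∧
      StrictAntiOn (muP n) (Set.Ioi 1) ∧
      Tendsto (muP n) (nhdsWithin (1 : ℝ) (Set.Ioi 1)) (nhds ((n : ℝ) / 4 - 1 / 2)) ∧
      Tendsto (muP n) atTop (nhds 0)) := by
  refine ⟨fun n hn γ hγ => muM_lt_muM_succ (by omega) hγ,
    fun n hn => ⟨strictAntiOn_muM (by omega), tendsto_muM_one (by omega), tendsto_muM_atTop n⟩,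
    ⟨criticalAspectRatio, fun n hn => ?_, criticalAspectRatio_three,
      fun n hn => criticalAspectRatio_lt_succ hn⟩,
    fun n hn γ hγ => ⟨muM_lt_muP n hγ, muP_lt_muP_succ (by omega) hγ⟩,
    fun n hn => ⟨fun γ hγ => muP_pos hn hγ, strictAntiOn_muP hn, tendsto_muP_one (by omega),
      tendsto_muP_atTop n⟩⟩
  have hone := one_lt_criticalAspectRatio hn
  exact ⟨hone, muM_criticalAspectRatio hn, fun γ hγ => (muM_pos_iff hn hγ).2,
    fun γ hγ => (muM_neg_iff hn (hone.trans hγ)).2 hγ, fun γ hγ => (muM_eq_zero_iff hn hγ).1⟩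
end

section
/- (Differential of the pseudo-energy, Lemma 2.3.) The function s ↦ E(ξ+sq) is differentiable at s = 0 and its derivative equals ∫₀^{2π} q(θ) · [ (1/(4π)) ∫₀^{2π} ( ln(|w(θ)−w(θ')|²) − 1 ) · Im( (conj(w(θ')) − conj(w(θ))) · ∂_{θ'}w(θ') ) dθ' ] dθ, where w := w_0-lift of ξ, i.e. w(θ) = (1+2ξ(θ))^{1/2}·w₀(θ); here the inner integral is an absolutely convergent improper integral (the integrand has only a logarithmic singularity at θ' = θ). -/
open Real MeasureTheory

/-- `g_γ(θ) := γ cos²θ + γ⁻¹ sin²θ`. -/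
noncomputable def gell (γ θ : ℝ) : ℝ := γ * Real.cos θ ^ 2 + γ⁻¹ * Real.sin θ ^ 2

/-- `w₀(θ) := √γ cos θ + i γ^{−1/2} sin θ`. -/
noncomputable def w0 (γ θ : ℝ) : ℂ :=
  (Real.sqrt γ * Real.cos θ : ℝ) + Complex.I * ((Real.sin θ / Real.sqrt γ : ℝ) : ℂ)

/-- The `w₀`-lift of `ξ`: `w(θ) := (1+2ξ(θ))^{1/2} w₀(θ)`. -/
noncomputable def wlift (γ : ℝ) (ξ : ℝ → ℝ) (θ : ℝ) : ℂ :=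
  (Real.sqrt (1 + 2 * ξ θ) : ℂ) * w0 γ θ

/-- `M(ξ)(θ,θ')`. -/
noncomputable def Mker (γ : ℝ) (ξ : ℝ → ℝ) (θ θ' : ℝ) : ℝ :=
  γ * (Real.sqrt (1 + 2 * ξ θ) * Real.cos θ - Real.sqrt (1 + 2 * ξ θ') * Real.cos θ') ^ 2 +
    γ⁻¹ * (Real.sqrt (1 + 2 * ξ θ) * Real.sin θ - Real.sqrt (1 + 2 * ξ θ') * Real.sin θ') ^ 2

/-- The mixed second partial derivative `∂²_{θθ'} M(ξ)(θ,θ')`. -/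
noncomputable def D2Mker (γ : ℝ) (ξ : ℝ → ℝ) (θ θ' : ℝ) : ℝ :=
  deriv (fun a => deriv (fun b => Mker γ ξ a b) θ') θ

/-- The pseudo-energy
`E(ξ) := (1/(32π)) ∫₀^{2π}∫₀^{2π} (ln M(ξ) − 2) · M(ξ) · ∂²_{θθ'}M(ξ) dθ' dθ`. -/
noncomputable def Epseudo (γ : ℝ) (ξ : ℝ → ℝ) : ℝ :=
  (1 / (32 * π)) *
    ∫ θ in (0:ℝ)..(2 * π), ∫ θ' in (0:ℝ)..(2 * π),
      (Real.log (Mker γ ξ θ θ') - 2) * Mker γ ξ θ θ' * D2Mker γ ξ θ θ'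

/-!
With `Φ z = (ln |z|² - 2) |z|²` the pseudo-energy is `-1/(16π) ∬ Φ(w - w') ⟨∂w, ∂w'⟩`, where `w` and
`w'` are taken at `θ` and `θ'`. Despite the logarithm, `Φ` is `C¹` with gradient
`2 (ln |z|² - 1) z`, so one may differentiate under the integral sign. If `w` moves with velocity
`v`, then by symmetry in `θ, θ'` the variation is twice the integral of
`⟨∇Φ(w - w'), v⟩ ⟨∂w, ∂w'⟩ + Φ(w - w') ⟨∂v, ∂w'⟩`. The plane identity
`⟨g, v⟩ ⟨p, p'⟩ - ⟨g, p⟩ ⟨v, p'⟩ = (v × p) (g × p')` turns this into the total derivative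
`∂_θ [Φ(w - w') ⟨v, ∂w'⟩]`, which integrates to zero over a closed curve, plus
`(v × ∂w) (∇Φ(w - w') × ∂w')`. For the radial motion of the lifted curve, `v × ∂w = q`.
-/

section

open Function Set Filter Topology
open scoped ComplexConjugate InnerProductSpace

/-! ### Parametric interval integrals -/

section ParametricIntegral

variable {X Y E : Type*} [TopologicalSpace X] [TopologicalSpace Y] [NormedAddCommGroup E]

theorem continuousOn_uncurry_comp_right {f : X → ℝ → E} {U : Set X} {g : Y → ℝ}
    (hf : ContinuousOn (uncurry f) (U ×ˢ univ)) (hg : Continuous g) :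
    ContinuousOn (fun x : X × Y => f x.1 (g x.2)) (U ×ˢ univ) :=
  hf.comp (f := fun x : X × Y => (x.1, g x.2)) (by fun_prop) fun _ hx => ⟨hx.1, mem_univ _⟩

theorem continuous_of_continuousOn_uncurry {f : X → Y → E} {U : Set X} {x : X}
    (hf : ContinuousOn (uncurry f) (U ×ˢ univ)) (hx : x ∈ U) : Continuous (f x) :=
  hf.comp_continuous (Continuous.prodMk_right x) fun _ => ⟨hx, mem_univ _⟩

variable [NormedSpace ℝ E]

theorem continuousOn_intervalIntegral [FirstCountableTopology X] {f : X → ℝ → E} {S : Set X}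
    (hf : ContinuousOn (uncurry f) (S ×ˢ univ)) (a b : ℝ) :
    ContinuousOn (fun x => ∫ t in a..b, f x t) S := by
  rw [continuousOn_iff_continuous_domRestrict]
  have hfS : Continuous (uncurry fun (x : S) t => f x t) :=
    hf.comp_continuous (f := fun y : S × ℝ => ((y.1 : X), y.2)) (by fun_prop)
      fun y => ⟨y.1.2, mem_univ _⟩
  exact intervalIntegral.continuous_parametric_intervalIntegral_of_continuous' hfS a b

theorem hasDerivAt_intervalIntegral_of_continuousOn {f f' : ℝ → ℝ → E} {U : Set ℝ} {s a b : ℝ}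
    (hU : IsOpen U) (hs : s ∈ U) (hf : ContinuousOn (uncurry f) (U ×ˢ univ))
    (hf' : ContinuousOn (uncurry f') (U ×ˢ univ))
    (hderiv : ∀ r ∈ U, ∀ t, HasDerivAt (fun r => f r t) (f' r t) r) :
    HasDerivAt (fun r => ∫ t in a..b, f r t) (∫ t in a..b, f' s t) s := by
  obtain ⟨K, hKs, hKU, hK⟩ := local_compact_nhds (hU.mem_nhds hs)
  obtain ⟨C, hC⟩ := (hK.prod isCompact_uIcc).exists_bound_of_continuousOn
    (hf'.mono (prod_mono hKU (subset_univ (uIcc a b))))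
  refine (intervalIntegral.hasDerivAt_integral_of_dominated_loc_of_deriv_le (bound := fun _ => C)
    hKs ?_ ?_ ?_ ?_ intervalIntegrable_const ?_).2
  · filter_upwards [hU.mem_nhds hs] with r hr
    exact (continuous_of_continuousOn_uncurry hf hr).aestronglyMeasurable
  · exact (continuous_of_continuousOn_uncurry hf hs).intervalIntegrable _ _
  · exact (continuous_of_continuousOn_uncurry hf' hs).aestronglyMeasurable
  · exact .of_forall fun t ht r hr => hC (r, t) ⟨hr, uIoc_subset_uIcc ht⟩
  · exact .of_forall fun t _ r hr => hderiv r (hKU hr) t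

theorem hasDerivAt_integral_integral_of_continuousOn {f f' : ℝ → ℝ → ℝ → E} {U : Set ℝ}
    {s a b c d : ℝ} (hU : IsOpen U) (hs : s ∈ U)
    (hf : ContinuousOn (fun x : ℝ × ℝ × ℝ => f x.1 x.2.1 x.2.2) (U ×ˢ univ))
    (hf' : ContinuousOn (fun x : ℝ × ℝ × ℝ => f' x.1 x.2.1 x.2.2) (U ×ˢ univ))
    (hderiv : ∀ r ∈ U, ∀ x y, HasDerivAt (fun r => f r x y) (f' r x y) r) :
    HasDerivAt (fun r => ∫ x in a..b, ∫ y in c..d, f r x y)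
      (∫ x in a..b, ∫ y in c..d, f' s x y) s := by
  have slice {g : ℝ → ℝ → ℝ → E}
      (hg : ContinuousOn (fun x : ℝ × ℝ × ℝ => g x.1 x.2.1 x.2.2) (U ×ˢ univ)) (x : ℝ) :
      ContinuousOn (uncurry fun r y => g r x y) (U ×ˢ univ) :=
    hg.comp (f := fun z : ℝ × ℝ => (z.1, x, z.2)) (by fun_prop) fun _ hz => ⟨hz.1, mem_univ _⟩
  have inner {g : ℝ → ℝ → ℝ → E}
      (hg : ContinuousOn (fun x : ℝ × ℝ × ℝ => g x.1 x.2.1 x.2.2) (U ×ˢ univ)) :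
      ContinuousOn (uncurry fun r x => ∫ y in c..d, g r x y) (U ×ˢ univ) :=
    continuousOn_intervalIntegral (X := ℝ × ℝ) (f := fun z y => g z.1 z.2 y)
      (hg.comp (f := fun z : (ℝ × ℝ) × ℝ => (z.1.1, z.1.2, z.2)) (by fun_prop)
        fun _ hz => ⟨hz.1.1, mem_univ _⟩) c d
  exact hasDerivAt_intervalIntegral_of_continuousOn hU hs (inner hf) (inner hf') fun r hr x =>
    hasDerivAt_intervalIntegral_of_continuousOn hU hr (slice hf x) (slice hf' x)
      fun r hr y => hderiv r hr x y

theorem integral_integral_swap_of_continuous {f : ℝ → ℝ → E} (hf : Continuous (uncurry f))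
    (a b c d : ℝ) :
    ∫ x in a..b, ∫ y in c..d, f x y = ∫ y in c..d, ∫ x in a..b, f x y :=
  intervalIntegral_intervalIntegral_swap <|
    (hf.continuousOn.integrableOn_compact (isCompact_uIcc.prod isCompact_uIcc)).mono_set
      (prod_mono uIoc_subset_uIcc uIoc_subset_uIcc)

theorem integral_integral_add {f g : ℝ → ℝ → E} (hf : Continuous (uncurry f))
    (hg : Continuous (uncurry g)) (a b c d : ℝ) :
    ∫ x in a..b, ∫ y in c..d, (f x y + g x y) =
      (∫ x in a..b, ∫ y in c..d, f x y) + ∫ x in a..b, ∫ y in c..d, g x y := by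
  have inner {h : ℝ → ℝ → E} (hh : Continuous (uncurry h)) (x : ℝ) :
      IntervalIntegrable (h x) volume c d := Continuous.intervalIntegrable (by fun_prop) c d
  have outer {h : ℝ → ℝ → E} (hh : Continuous (uncurry h)) :
      IntervalIntegrable (fun x => ∫ y in c..d, h x y) volume a b :=
    Continuous.intervalIntegrable (by fun_prop) a b
  simp only [intervalIntegral.integral_add (inner hf _) (inner hg _)]
  exact intervalIntegral.integral_add (outer hf) (outer hg)

theorem integral_integral_add_swap {f : ℝ → ℝ → E} (hf : Continuous (uncurry f)) (a b : ℝ) :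
    ∫ x in a..b, ∫ y in a..b, (f x y + f y x) = (2 : ℝ) • ∫ x in a..b, ∫ y in a..b, f x y := by
  rw [integral_integral_add (g := fun x y => f y x) hf (hf.comp continuous_swap),
    ← integral_integral_swap_of_continuous hf, two_smul]

theorem integral_integral_eq_zero_of_hasDerivAt [CompleteSpace E] {f f' : ℝ → ℝ → E}
    {a b c d : ℝ} (hf : ∀ x y, HasDerivAt (fun x => f x y) (f' x y) x)
    (hf' : Continuous (uncurry f')) (hab : ∀ y, f b y = f a y) :
    ∫ x in a..b, ∫ y in c..d, f' x y = 0 := by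
  rw [integral_integral_swap_of_continuous hf']
  refine intervalIntegral.integral_zero_ae (.of_forall fun y _ => ?_)
  rw [intervalIntegral.integral_eq_sub_of_hasDerivAt (fun x _ => hf x y)
    (Continuous.intervalIntegrable (by fun_prop) a b), hab, sub_self]

end ParametricIntegral

/-! ### The logarithmic density -/

section LogDensity

variable {E : Type*} [NormedAddCommGroup E]

/-- The density `(ln |z|² − 2) |z|²` by which the pseudo-energy weighs a chord `z` of the curve,
extended by `0` to `z = 0`. -/
noncomputable def logDensity (z : E) : ℝ :=
  (Real.log (‖z‖ ^ 2) - 2) * ‖z‖ ^ 2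

theorem logDensity_even : Function.Even (logDensity : E → ℝ) := fun z => by
  simp only [logDensity, norm_neg]

variable [InnerProductSpace ℝ E]

/-- The gradient `2 (ln |z|² − 1) z` of `logDensity`; as `logDensity` itself, it takes the value `0`
at `z = 0`. -/
noncomputable def logGradient (z : E) : E :=
  (2 * (Real.log (‖z‖ ^ 2) - 1)) • z

theorem continuous_logGradient : Continuous (logGradient : E → E) := by
  rw [continuous_iff_continuousAt]
  intro z
  obtain rfl | hz := eq_or_ne z 0
  · have hbound : Tendsto (fun z : E => |4 * (‖z‖ * Real.log ‖z‖) - 2 * ‖z‖|) (𝓝 0) (𝓝 0) := by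
      have hcont : Continuous fun z : E => |4 * (‖z‖ * Real.log ‖z‖) - 2 * ‖z‖| :=
        ((continuous_norm.mul_log.const_mul 4).sub (continuous_norm.const_mul 2)).abs
      simpa using hcont.tendsto 0
    rw [ContinuousAt, show logGradient (0 : E) = 0 from smul_zero _]
    refine squeeze_zero_norm (fun z => le_of_eq ?_) hbound
    rw [logGradient, norm_smul, Real.norm_eq_abs, Real.log_pow, ← abs_norm z, ← abs_mul, abs_norm]
    push_cast
    ring_nf
  · have : ‖z‖ ^ 2 ≠ 0 := by simpa using hz
    unfold logGradient
    fun_prop (disch := assumption)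

theorem log_normSq_sub_one_mul_im (z z' d : ℂ) :
    (Real.log (Complex.normSq (z - z')) - 1) * ((conj z' - conj z) * d).im =
      -(1 / 2) * (conj (logGradient (z - z')) * d).im := by
  rw [logGradient, Complex.normSq_eq_norm_sq]
  generalize Real.log (‖z - z'‖ ^ 2) - 1 = L
  simp only [Complex.mul_im, Complex.sub_re, Complex.sub_im, Complex.conj_re, Complex.conj_im,
    Complex.smul_re, Complex.smul_im, smul_eq_mul]
  ring

variable [CompleteSpace E]

theorem hasGradientAt_logDensity_zero : HasGradientAt logDensity (0 : E) 0 := by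
  have hlim : Tendsto (fun z : E => 2 * (‖z‖ * Real.log ‖z‖) - 2 * ‖z‖) (𝓝 0) (𝓝 0) := by
    have hcont : Continuous fun z : E => 2 * (‖z‖ * Real.log ‖z‖) - 2 * ‖z‖ :=
      (continuous_norm.mul_log.const_mul 2).sub (continuous_norm.const_mul 2)
    simpa using hcont.tendsto 0
  rw [hasGradientAt_iff_isLittleO_nhds_zero]
  refine ((((Asymptotics.isLittleO_one_iff ℝ).2 hlim).mul_isBigO
    (Asymptotics.isBigO_refl (fun z : E => ‖z‖) (𝓝 0))).congr (fun z => ?_)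
      fun z => one_mul _).of_norm_right
  simp only [zero_add, logDensity, Real.log_pow, norm_zero, inner_zero_left]
  push_cast
  ring

theorem hasGradientAt_logDensity (z : E) : HasGradientAt logDensity (logGradient z) z := by
  obtain rfl | hz := eq_or_ne z 0
  · simpa only [logGradient, smul_zero] using hasGradientAt_logDensity_zero (E := E)
  · have hnorm : ‖z‖ ^ 2 ≠ 0 := by simpa using hz
    have hsq := (hasStrictFDerivAt_norm_sq z).hasFDerivAt
    refine (((hsq.log hnorm).sub_const 2).mul hsq).congr_fderiv ?_
    ext h
    simp only [Real.log_pow, Nat.cast_ofNat, add_apply, smul_apply, coe_innerSL_apply,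
      nsmul_eq_mul, smul_eq_mul, logGradient, map_smul, InnerProductSpace.toDual_apply_apply]
    field_simp
    ring

end LogDensity

/-! ### First variation of the self-interaction energy -/

/-- `w`, `s ∈ U`, is a `C¹` family of curves `w s` with tangents `p = ∂_θ w`, velocities
`v = ∂_s w` and continuous mixed derivative `u = ∂_θ v = ∂_s p`. -/
structure IsVariation {E : Type*} [NormedAddCommGroup E] [NormedSpace ℝ E] (U : Set ℝ)
    (w p v u : ℝ → ℝ → E) : Prop where
  continuousOn_curve : ContinuousOn (uncurry w) (U ×ˢ univ)
  continuousOn_tangent : ContinuousOn (uncurry p) (U ×ˢ univ)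
  continuousOn_velocity : ContinuousOn (uncurry v) (U ×ˢ univ)
  continuousOn_mixed : ContinuousOn (uncurry u) (U ×ˢ univ)
  hasDerivAt_curve : ∀ s ∈ U, ∀ θ, HasDerivAt (w s) (p s θ) θ
  hasDerivAt_velocity : ∀ s ∈ U, ∀ θ, HasDerivAt (v s) (u s θ) θ
  hasDerivAt_curve_param : ∀ s ∈ U, ∀ θ, HasDerivAt (fun s => w s θ) (v s θ) s
  hasDerivAt_tangent_param : ∀ s ∈ U, ∀ θ, HasDerivAt (fun s => p s θ) (u s θ) s

section SelfEnergy

variable {E : Type*} [NormedAddCommGroup E] [InnerProductSpace ℝ E]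

/-- The self-interaction energy `∬ Φ(w(θ) − w(θ')) ⟨w'(θ), w'(θ')⟩ dθ' dθ` over `[a, b]²` of a
curve `w`. -/
noncomputable def selfEnergy (Φ : E → ℝ) (a b : ℝ) (w : ℝ → E) : ℝ :=
  ∫ θ in a..b, ∫ θ' in a..b, Φ (w θ - w θ') * ⟪deriv w θ, deriv w θ'⟫_ℝ

/-- The derivative of the integrand `Φ(w(θ) − w(θ')) ⟨p(θ), p(θ')⟩` of the self-interaction energy
when `w` moves with velocity `v` and `p` with velocity `u`, where `G` is the gradient of `Φ`. -/
noncomputable def energyVariation (Φ : E → ℝ) (G : E → E) (w p v u : ℝ → E) (θ θ' : ℝ) : ℝ :=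
  Φ (w θ - w θ') * (⟪p θ, u θ'⟫_ℝ + ⟪u θ, p θ'⟫_ℝ) +
    ⟪G (w θ - w θ'), v θ - v θ'⟫_ℝ * ⟪p θ, p θ'⟫_ℝ

variable [CompleteSpace E] {Φ : E → ℝ} {G : E → E}

theorem hasDerivAt_comp_of_hasGradientAt {g : E} {z : ℝ → E} {z' : E} {t : ℝ}
    (hΦ : HasGradientAt Φ g (z t)) (hz : HasDerivAt z z' t) :
    HasDerivAt (fun t => Φ (z t)) ⟪g, z'⟫_ℝ t := by
  simpa only [Function.comp_def, InnerProductSpace.toDual_apply_apply] using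
    hΦ.hasFDerivAt.comp_hasDerivAt t hz

theorem gradient_odd_of_even (hΦ : ∀ z, HasGradientAt Φ (G z) z) (heven : Function.Even Φ) :
    Function.Odd G := fun z => by
  have h := (hΦ (-z)).hasFDerivAt.comp z (hasFDerivAt_id z).neg
  simp only [Function.comp_def, heven _] at h
  refine (hasGradientAt_iff_hasFDerivAt.2 (h.congr_fderiv ?_)).unique (hΦ z) |> neg_eq_iff_eq_neg.1
  ext y
  simp

theorem IsVariation.hasDerivAt_energyVariation {U : Set ℝ} {w p v u : ℝ → ℝ → E} {s : ℝ}
    (hw : IsVariation U w p v u) (hs : s ∈ U) (hΦ : ∀ z, HasGradientAt Φ (G z) z) (θ θ' : ℝ) :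
    HasDerivAt (fun s => Φ (w s θ - w s θ') * ⟪p s θ, p s θ'⟫_ℝ)
      (energyVariation Φ G (w s) (p s) (v s) (u s) θ θ') s := by
  have hchord := (hw.hasDerivAt_curve_param s hs θ).sub (hw.hasDerivAt_curve_param s hs θ')
  have hinner := (hw.hasDerivAt_tangent_param s hs θ).inner ℝ (hw.hasDerivAt_tangent_param s hs θ')
  refine ((hasDerivAt_comp_of_hasGradientAt (hΦ _) hchord).mul hinner).congr_deriv ?_
  rw [add_comm]
  rfl

theorem IsVariation.hasDerivAt_selfEnergy_energyVariation {U : Set ℝ} {w p v u : ℝ → ℝ → E}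
    {s a b : ℝ} (hw : IsVariation U w p v u) (hU : IsOpen U) (hs : s ∈ U)
    (hΦ : ∀ z, HasGradientAt Φ (G z) z) (hG : Continuous G) :
    HasDerivAt (fun s => selfEnergy Φ a b (w s))
      (∫ θ in a..b, ∫ θ' in a..b, energyVariation Φ G (w s) (p s) (v s) (u s) θ θ') s := by
  have hΦc : Continuous Φ := continuous_iff_continuousAt.2 fun z => (hΦ z).continuousAt
  have atFst {f : ℝ → ℝ → E} (hf : ContinuousOn (uncurry f) (U ×ˢ univ)) :=
    continuousOn_uncurry_comp_right hf (continuous_fst (X := ℝ) (Y := ℝ))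
  have atSnd {f : ℝ → ℝ → E} (hf : ContinuousOn (uncurry f) (U ×ˢ univ)) :=
    continuousOn_uncurry_comp_right hf (continuous_snd (X := ℝ) (Y := ℝ))
  have hchord := (atFst hw.continuousOn_curve).sub (atSnd hw.continuousOn_curve)
  have hΦw := hΦc.comp_continuousOn hchord
  have hGw := hG.comp_continuousOn hchord
  have hp₁ := atFst hw.continuousOn_tangent
  have hp₂ := atSnd hw.continuousOn_tangent
  have hv := (atFst hw.continuousOn_velocity).sub (atSnd hw.continuousOn_velocity)
  have hu₁ := atFst hw.continuousOn_mixed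
  have hu₂ := atSnd hw.continuousOn_mixed
  have henergy : (fun r => selfEnergy Φ a b (w r)) =ᶠ[𝓝 s] fun r =>
      ∫ θ in a..b, ∫ θ' in a..b, Φ (w r θ - w r θ') * ⟪p r θ, p r θ'⟫_ℝ := by
    filter_upwards [hU.mem_nhds hs] with r hr
    simp only [selfEnergy, (hw.hasDerivAt_curve r hr _).deriv]
  exact (hasDerivAt_integral_integral_of_continuousOn hU hs (hΦw.mul (hp₁.inner hp₂))
    ((hΦw.mul ((hp₁.inner hu₂).add (hu₁.inner hp₂))).add ((hGw.inner hv).mul (hp₁.inner hp₂)))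
    fun r hr => hw.hasDerivAt_energyVariation hr hΦ).congr_of_eventuallyEq henergy

end SelfEnergy

/-! ### Plane curves -/

section PlaneCurve

variable {Φ : ℂ → ℝ} {G : ℂ → ℂ}

theorem inner_mul_inner_sub_inner_mul_inner (a b c d : ℂ) :
    ⟪a, b⟫_ℝ * ⟪c, d⟫_ℝ - ⟪a, c⟫_ℝ * ⟪b, d⟫_ℝ = (conj b * c).im * (conj a * d).im := by
  simp only [Complex.inner, Complex.mul_re, Complex.mul_im, Complex.conj_re, Complex.conj_im]
  ring

/-- The part of half the energy variation that only sees the component of the velocity `v` normal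
to the curve `w` with tangent `p`. -/
noncomputable def normalVariation (G : ℂ → ℂ) (w p v : ℝ → ℂ) (θ θ' : ℝ) : ℝ :=
  (conj (v θ) * p θ).im * (conj (G (w θ - w θ')) * p θ').im

/-- The part of half the energy variation that is the total derivative
`∂_θ [Φ(w(θ) − w(θ')) ⟨v(θ), p(θ')⟩]`. -/
noncomputable def exactVariation (Φ : ℂ → ℝ) (G : ℂ → ℂ) (w p v u : ℝ → ℂ) (θ θ' : ℝ) : ℝ :=
  ⟪G (w θ - w θ'), p θ⟫_ℝ * ⟪v θ, p θ'⟫_ℝ + Φ (w θ - w θ') * ⟪u θ, p θ'⟫_ℝ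

theorem hasDerivAt_exactVariation {w p v u : ℝ → ℂ} {θ : ℝ} (hw : HasDerivAt w (p θ) θ)
    (hv : HasDerivAt v (u θ) θ) (hΦ : ∀ z, HasGradientAt Φ (G z) z) (θ' : ℝ) :
    HasDerivAt (fun θ => Φ (w θ - w θ') * ⟪v θ, p θ'⟫_ℝ) (exactVariation Φ G w p v u θ θ') θ := by
  have hinner := hv.inner ℝ (hasDerivAt_const θ (p θ'))
  rw [inner_zero_right, zero_add] at hinner
  exact (hasDerivAt_comp_of_hasGradientAt (hΦ _) (hw.sub_const (w θ'))).mul hinner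

theorem energyVariation_eq_add_swap (hΦ : Function.Even Φ) (hG : Function.Odd G)
    (w p v u : ℝ → ℂ) (θ θ' : ℝ) :
    energyVariation Φ G w p v u θ θ' =
      (normalVariation G w p v θ θ' + exactVariation Φ G w p v u θ θ') +
        (normalVariation G w p v θ' θ + exactVariation Φ G w p v u θ' θ) := by
  have hswap : w θ' - w θ = -(w θ - w θ') := (neg_sub _ _).symm
  simp only [normalVariation, exactVariation, energyVariation,
    ← inner_mul_inner_sub_inner_mul_inner, hswap, hΦ _, hG _, inner_sub_right, inner_neg_left,
    real_inner_comm (p θ) (p θ'), real_inner_comm (p θ) (u θ')]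
  ring

theorem integral_energyVariation {w p v u : ℝ → ℂ} {a b : ℝ} (hp : Continuous p)
    (hu : Continuous u) (hw : ∀ θ, HasDerivAt w (p θ) θ) (hv : ∀ θ, HasDerivAt v (u θ) θ)
    (hwab : w b = w a) (hvab : v b = v a) (hΦ : ∀ z, HasGradientAt Φ (G z) z)
    (hG : Continuous G) (heven : Function.Even Φ) :
    ∫ θ in a..b, ∫ θ' in a..b, energyVariation Φ G w p v u θ θ' =
      2 * ∫ θ in a..b, ∫ θ' in a..b, normalVariation G w p v θ θ' := by
  have hwc : Continuous w := continuous_iff_continuousAt.2 fun θ => (hw θ).continuousAt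
  have hvc : Continuous v := continuous_iff_continuousAt.2 fun θ => (hv θ).continuousAt
  have hΦc : Continuous Φ := continuous_iff_continuousAt.2 fun z => (hΦ z).continuousAt
  have hnormal : Continuous (uncurry (normalVariation G w p v)) := by
    unfold normalVariation
    fun_prop
  have hexact : Continuous (uncurry (exactVariation Φ G w p v u)) := by
    unfold exactVariation
    fun_prop
  have hexact_zero : ∫ θ in a..b, ∫ θ' in a..b, exactVariation Φ G w p v u θ θ' = 0 :=
    integral_integral_eq_zero_of_hasDerivAt
      (fun θ θ' => hasDerivAt_exactVariation (hw θ) (hv θ) hΦ θ') hexact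
      fun θ' => by rw [hwab, hvab]
  simp only [energyVariation_eq_add_swap heven (gradient_odd_of_even hΦ heven)]
  rw [integral_integral_add_swap (f := fun θ θ' =>
      normalVariation G w p v θ θ' + exactVariation Φ G w p v u θ θ') (hnormal.add hexact),
    integral_integral_add hnormal hexact, hexact_zero, add_zero, smul_eq_mul]

theorem IsVariation.hasDerivAt_selfEnergy {U : Set ℝ} {w p v u : ℝ → ℝ → ℂ} {s a b : ℝ}
    (hw : IsVariation U w p v u) (hU : IsOpen U) (hs : s ∈ U) (hwab : w s b = w s a)
    (hvab : v s b = v s a) (hΦ : ∀ z, HasGradientAt Φ (G z) z) (hG : Continuous G)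
    (heven : Function.Even Φ) :
    HasDerivAt (fun s => selfEnergy Φ a b (w s))
      (2 * ∫ θ in a..b, (conj (v s θ) * deriv (w s) θ).im *
        ∫ θ' in a..b, (conj (G (w s θ - w s θ')) * deriv (w s) θ').im) s := by
  refine (hw.hasDerivAt_selfEnergy_energyVariation hU hs hΦ hG).congr_deriv ?_
  rw [integral_energyVariation (continuous_of_continuousOn_uncurry hw.continuousOn_tangent hs)
    (continuous_of_continuousOn_uncurry hw.continuousOn_mixed hs) (hw.hasDerivAt_curve s hs)
    (hw.hasDerivAt_velocity s hs) hwab hvab hΦ hG heven]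
  simp only [normalVariation, intervalIntegral.integral_const_mul,
    (hw.hasDerivAt_curve s hs _).deriv]

end PlaneCurve

/-! ### Variations of the lifted curve -/

section Variation

variable {E : Type*} [NormedAddCommGroup E] [NormedSpace ℝ E] {U : Set ℝ}

theorem isVariation_add_smul {f g : ℝ → E} (hf : ContDiff ℝ 1 f) (hg : ContDiff ℝ 1 g)
    (U : Set ℝ) :
    IsVariation U (fun s θ => f θ + s • g θ) (fun s θ => deriv f θ + s • deriv g θ)
      (fun _ => g) (fun _ => deriv g) := by
  have hfd (θ : ℝ) := (hf.differentiable one_ne_zero θ).hasDerivAt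
  have hgd (θ : ℝ) := (hg.differentiable one_ne_zero θ).hasDerivAt
  have hparam (x y : E) (s : ℝ) : HasDerivAt (fun s : ℝ => x + s • y) y s := by
    simpa only [one_smul] using ((hasDerivAt_id' s).smul_const y).const_add x
  have hfc := hf.continuous
  have hgc := hg.continuous
  exact
    { continuousOn_curve := by fun_prop
      continuousOn_tangent := by fun_prop
      continuousOn_velocity := by fun_prop
      continuousOn_mixed := by fun_prop
      hasDerivAt_curve := fun s _ θ => (hfd θ).add ((hgd θ).const_smul s)
      hasDerivAt_velocity := fun _ _ θ => hgd θ
      hasDerivAt_curve_param := fun s _ θ => hparam (f θ) (g θ) s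
      hasDerivAt_tangent_param := fun s _ θ => hparam (deriv f θ) (deriv g θ) s }

theorem hasDerivAt_div_two_mul_sqrt {f g : ℝ → ℝ} {f' g' t : ℝ} (hf : HasDerivAt f f' t)
    (hg : HasDerivAt g g' t) (hpos : 0 < f t) :
    HasDerivAt (fun t => g t / (2 * √(f t)))
      (g' / (2 * √(f t)) - g t * f' / (4 * √(f t) ^ 3)) t := by
  have hsqrt : √(f t) ≠ 0 := (Real.sqrt_pos.2 hpos).ne'
  refine (hg.div ((hf.sqrt hpos.ne').const_mul 2) (mul_ne_zero two_ne_zero hsqrt)).congr_deriv ?_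
  field_simp
  ring

theorem IsVariation.sqrt {f p v u : ℝ → ℝ → ℝ} (hf : IsVariation U f p v u)
    (hpos : ∀ s ∈ U, ∀ θ, 0 < f s θ) :
    IsVariation U (fun s θ => √(f s θ)) (fun s θ => p s θ / (2 * √(f s θ)))
      (fun s θ => v s θ / (2 * √(f s θ)))
      (fun s θ => u s θ / (2 * √(f s θ)) - v s θ * p s θ / (4 * √(f s θ) ^ 3)) := by
  have hsqrt := hf.continuousOn_curve.sqrt
  have hne : ∀ x ∈ U ×ˢ (univ : Set ℝ), 2 * √(uncurry f x) ≠ 0 := fun x hx =>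
    mul_ne_zero two_ne_zero (Real.sqrt_pos.2 (hpos x.1 hx.1 x.2)).ne'
  have hne' : ∀ x ∈ U ×ˢ (univ : Set ℝ), 4 * √(uncurry f x) ^ 3 ≠ 0 := fun x hx =>
    mul_ne_zero four_ne_zero (pow_ne_zero 3 (Real.sqrt_pos.2 (hpos x.1 hx.1 x.2)).ne')
  have htwo := hsqrt.const_mul 2
  exact
    { continuousOn_curve := hsqrt
      continuousOn_tangent := hf.continuousOn_tangent.div htwo hne
      continuousOn_velocity := hf.continuousOn_velocity.div htwo hne
      continuousOn_mixed := (hf.continuousOn_mixed.div htwo hne).sub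
        ((hf.continuousOn_velocity.mul hf.continuousOn_tangent).div
          ((hsqrt.pow 3).const_mul 4) hne')
      hasDerivAt_curve := fun s hs θ => (hf.hasDerivAt_curve s hs θ).sqrt (hpos s hs θ).ne'
      hasDerivAt_velocity := fun s hs θ => hasDerivAt_div_two_mul_sqrt
        (hf.hasDerivAt_curve s hs θ) (hf.hasDerivAt_velocity s hs θ) (hpos s hs θ)
      hasDerivAt_curve_param := fun s hs θ =>
        (hf.hasDerivAt_curve_param s hs θ).sqrt (hpos s hs θ).ne'
      hasDerivAt_tangent_param := fun s hs θ =>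
        (hasDerivAt_div_two_mul_sqrt (hf.hasDerivAt_curve_param s hs θ)
          (hf.hasDerivAt_tangent_param s hs θ) (hpos s hs θ)).congr_deriv
            (by rw [mul_comm (p s θ)]) }

theorem IsVariation.smul_curve {r p v u : ℝ → ℝ → ℝ} {e e' : ℝ → E} (hr : IsVariation U r p v u)
    (he : ∀ θ, HasDerivAt e (e' θ) θ) (he' : Continuous e') :
    IsVariation U (fun s θ => r s θ • e θ) (fun s θ => r s θ • e' θ + p s θ • e θ)
      (fun s θ => v s θ • e θ) (fun s θ => v s θ • e' θ + u s θ • e θ) := by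
  have hec : Continuous e := continuous_iff_continuousAt.2 fun θ => (he θ).continuousAt
  have hes : ContinuousOn (fun x : ℝ × ℝ => e x.2) (U ×ˢ univ) := by fun_prop
  have hes' : ContinuousOn (fun x : ℝ × ℝ => e' x.2) (U ×ˢ univ) := by fun_prop
  exact
    { continuousOn_curve := hr.continuousOn_curve.smul hes
      continuousOn_tangent :=
        (hr.continuousOn_curve.smul hes').add (hr.continuousOn_tangent.smul hes)
      continuousOn_velocity := hr.continuousOn_velocity.smul hes
      continuousOn_mixed :=
        (hr.continuousOn_velocity.smul hes').add (hr.continuousOn_mixed.smul hes)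
      hasDerivAt_curve := fun s hs θ => (hr.hasDerivAt_curve s hs θ).smul (he θ)
      hasDerivAt_velocity := fun s hs θ => (hr.hasDerivAt_velocity s hs θ).smul (he θ)
      hasDerivAt_curve_param := fun s hs θ => (hr.hasDerivAt_curve_param s hs θ).smul_const (e θ)
      hasDerivAt_tangent_param := fun s hs θ =>
        ((hr.hasDerivAt_curve_param s hs θ).smul_const (e' θ)).add
          ((hr.hasDerivAt_tangent_param s hs θ).smul_const (e θ)) }

theorem eventually_forall_pos_of_periodic {f g : ℝ → ℝ} {T : ℝ} (hf : Continuous f)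
    (hg : Continuous g) (hfT : Periodic f T) (hgT : Periodic g T) (hT : 0 < T)
    (hpos : ∀ θ, 0 < f θ) : ∀ᶠ s in 𝓝 (0 : ℝ), ∀ θ, 0 < f θ + s * g θ := by
  have hcont : Continuous fun z : ℝ × ℝ => f z.2 + z.1 * g z.2 := by fun_prop
  have hcompact : ∀ᶠ s in 𝓝 (0 : ℝ), ∀ θ ∈ Icc 0 T, 0 < f θ + s * g θ :=
    isCompact_Icc.eventually_forall_of_forall_eventually fun θ _ =>
      hcont.continuousAt.eventually (lt_mem_nhds (by simpa using hpos θ))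
  filter_upwards [hcompact] with s hs θ
  have hper : Periodic (fun θ => f θ + s * g θ) T := fun θ => by simp only [hfT θ, hgT θ]
  obtain ⟨θ₀, hθ₀, heq⟩ := hper.exists_mem_Ico₀ hT θ
  exact (hs θ₀ (Ico_subset_Icc_self hθ₀)).trans_eq heq.symm

end Variation

section Lift

variable {γ : ℝ} {ξ q : ℝ → ℝ}

theorem hasDerivAt_w0 (γ θ : ℝ) : HasDerivAt (w0 γ) (w0 γ (θ + π / 2)) θ := by
  have hre := ((Real.hasDerivAt_cos θ).const_mul √γ).ofReal_comp
  have him := (((Real.hasDerivAt_sin θ).div_const √γ).ofReal_comp).const_mul Complex.I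
  refine (hre.add him).congr_deriv ?_
  simp only [w0, Real.cos_add_pi_div_two, Real.sin_add_pi_div_two]

theorem continuous_w0 (γ : ℝ) : Continuous (w0 γ) :=
  continuous_iff_continuousAt.2 fun θ => (hasDerivAt_w0 γ θ).continuousAt

theorem w0_periodic (γ : ℝ) : Periodic (w0 γ) (2 * π) := fun θ => by
  simp only [w0, Real.cos_add_two_pi, Real.sin_add_two_pi]

theorem w0_re (γ θ : ℝ) : (w0 γ θ).re = √γ * Real.cos θ := by
  simp [w0, -Complex.ofReal_cos, -Complex.ofReal_sin, -Complex.ofReal_div]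

theorem w0_im (γ θ : ℝ) : (w0 γ θ).im = Real.sin θ / √γ := by
  simp [w0, -Complex.ofReal_cos, -Complex.ofReal_sin, -Complex.ofReal_div]

theorem im_conj_w0_mul_w0_add_pi_div_two (hγ : 0 < γ) (θ : ℝ) :
    (conj (w0 γ θ) * w0 γ (θ + π / 2)).im = 1 := by
  have hsqrt : √γ ≠ 0 := (Real.sqrt_pos.2 hγ).ne'
  simp only [Complex.mul_im, Complex.conj_re, Complex.conj_im, w0_re, w0_im,
    Real.cos_add_pi_div_two, Real.sin_add_pi_div_two]
  field_simp
  linear_combination Real.cos_sq_add_sin_sq θ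

theorem wlift_eq_smul (γ : ℝ) (ξ : ℝ → ℝ) (θ : ℝ) : wlift γ ξ θ = √(1 + 2 * ξ θ) • w0 γ θ :=
  (Complex.real_smul ..).symm

theorem wlift_periodic (γ : ℝ) (hξ : Periodic ξ (2 * π)) : Periodic (wlift γ ξ) (2 * π) :=
  fun θ => by simp only [wlift, hξ θ, w0_periodic γ θ]

/-- The velocity of the lifted curve `wlift γ ξ` when `ξ` moves with velocity `q`. -/
noncomputable def liftVelocity (γ : ℝ) (ξ q : ℝ → ℝ) (θ : ℝ) : ℂ :=
  (q θ / √(1 + 2 * ξ θ)) • w0 γ θ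

theorem liftVelocity_periodic (γ : ℝ) (hξ : Periodic ξ (2 * π)) (hq : Periodic q (2 * π)) :
    Periodic (liftVelocity γ ξ q) (2 * π) :=
  fun θ => by simp only [liftVelocity, hξ θ, hq θ, w0_periodic γ θ]

theorem hasDerivAt_wlift (γ : ℝ) {ξ' θ : ℝ} (hξ : HasDerivAt ξ ξ' θ) (hpos : 0 < 1 + 2 * ξ θ) :
    HasDerivAt (wlift γ ξ)
      (√(1 + 2 * ξ θ) • w0 γ (θ + π / 2) + (2 * ξ' / (2 * √(1 + 2 * ξ θ))) • w0 γ θ) θ := by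
  rw [funext (wlift_eq_smul γ ξ)]
  exact (((hξ.const_mul 2).const_add 1).sqrt hpos.ne').smul (hasDerivAt_w0 γ θ)

theorem differentiable_wlift (γ : ℝ) (hξ : Differentiable ℝ ξ) (hpos : ∀ θ, 0 < 1 + 2 * ξ θ) :
    Differentiable ℝ (wlift γ ξ) :=
  fun θ => (hasDerivAt_wlift γ (hξ θ).hasDerivAt (hpos θ)).differentiableAt

theorem continuous_deriv_wlift (γ : ℝ) (hξ : ContDiff ℝ 1 ξ) (hpos : ∀ θ, 0 < 1 + 2 * ξ θ) :
    Continuous (deriv (wlift γ ξ)) := by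
  have hw0 := continuous_w0 γ
  have hsqrt (θ : ℝ) : 2 * √(1 + 2 * ξ θ) ≠ 0 :=
    mul_ne_zero two_ne_zero (Real.sqrt_pos.2 (hpos θ)).ne'
  rw [funext fun θ =>
    (hasDerivAt_wlift γ (hξ.differentiable one_ne_zero θ).hasDerivAt (hpos θ)).deriv]
  fun_prop (disch := exact hsqrt)

/-- The radius `r = √(1 + 2 ξ)` cancels: `v × ∂w = (q / r) w₀ × r w₀' = q`, since `w₀ × w₀' = 1`. -/
theorem im_conj_liftVelocity_mul_deriv_wlift (hγ : 0 < γ) (q : ℝ → ℝ) {θ : ℝ}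
    (hξ : DifferentiableAt ℝ ξ θ) (hpos : 0 < 1 + 2 * ξ θ) :
    (conj (liftVelocity γ ξ q θ) * deriv (wlift γ ξ) θ).im = q θ := by
  have hsqrt : √(1 + 2 * ξ θ) ≠ 0 := (Real.sqrt_pos.2 hpos).ne'
  have hcross := im_conj_w0_mul_w0_add_pi_div_two hγ θ
  rw [(hasDerivAt_wlift γ hξ.hasDerivAt hpos).deriv, liftVelocity]
  generalize w0 γ (θ + π / 2) = e' at hcross ⊢
  simp only [Complex.mul_im, Complex.conj_re, Complex.conj_im, Complex.add_re, Complex.add_im,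
    Complex.smul_re, Complex.smul_im, smul_eq_mul] at hcross ⊢
  field_simp
  linear_combination q θ * √(1 + 2 * ξ θ) ^ 2 * hcross

theorem exists_isVariation_wlift (γ : ℝ) (hξ : ContDiff ℝ 1 ξ) (hq : ContDiff ℝ 1 q) {U : Set ℝ}
    (hpos : ∀ s ∈ U, ∀ θ, 0 < 1 + 2 * (ξ θ + s * q θ)) :
    ∃ p u, IsVariation U (fun s => wlift γ fun θ => ξ θ + s * q θ) p
      (fun s => liftVelocity γ (fun θ => ξ θ + s * q θ) q) u := by
  have haff (s θ : ℝ) : 1 + 2 * ξ θ + s • (2 * q θ) = 1 + 2 * (ξ θ + s * q θ) := by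
    rw [smul_eq_mul]
    ring
  have hradicand := isVariation_add_smul (f := fun θ => 1 + 2 * ξ θ) (g := fun θ => 2 * q θ)
    (by fun_prop) (by fun_prop) U
  have hlift := (hradicand.sqrt fun s hs θ => by simpa only [haff] using hpos s hs θ).smul_curve
    (hasDerivAt_w0 γ) (by have := continuous_w0 γ; fun_prop)
  simp only [haff, mul_div_mul_left _ _ (two_ne_zero' ℝ)] at hlift
  exact ⟨_, _, hlift⟩

theorem Mker_eq_norm_sq (hγ : 0 < γ) (ξ : ℝ → ℝ) (θ θ' : ℝ) :
    Mker γ ξ θ θ' = ‖wlift γ ξ θ - wlift γ ξ θ'‖ ^ 2 := by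
  have hsq : √γ ^ 2 = γ := Real.sq_sqrt hγ.le
  have hsq_inv : (√γ)⁻¹ ^ 2 = γ⁻¹ := by rw [inv_pow, hsq]
  simp only [← Complex.normSq_eq_norm_sq, Mker, wlift_eq_smul, Complex.normSq_apply,
    Complex.sub_re, Complex.sub_im, Complex.smul_re, Complex.smul_im, smul_eq_mul, w0_re, w0_im,
    div_eq_mul_inv]
  rw [← hsq_inv]
  nth_rewrite 1 [← hsq]
  ring

theorem D2Mker_eq (hγ : 0 < γ) (hw : Differentiable ℝ (wlift γ ξ)) (θ θ' : ℝ) :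
    D2Mker γ ξ θ θ' = -2 * ⟪deriv (wlift γ ξ) θ, deriv (wlift γ ξ) θ'⟫_ℝ := by
  have hfirst (a : ℝ) : deriv (fun b => Mker γ ξ a b) θ' =
      2 * ⟪wlift γ ξ a - wlift γ ξ θ', -deriv (wlift γ ξ) θ'⟫_ℝ := by
    simp only [Mker_eq_norm_sq hγ]
    exact ((hw θ').hasDerivAt.const_sub (wlift γ ξ a)).norm_sq.deriv
  have hsecond := (((hw θ).hasDerivAt.sub_const (wlift γ ξ θ')).inner ℝ
    (hasDerivAt_const θ (-deriv (wlift γ ξ) θ'))).const_mul 2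
  simp only [D2Mker, hfirst]
  rw [hsecond.deriv, inner_zero_right, zero_add, inner_neg_right, mul_neg, neg_mul]

theorem Epseudo_eq_selfEnergy (hγ : 0 < γ) (hw : Differentiable ℝ (wlift γ ξ)) :
    Epseudo γ ξ = -(1 / (16 * π)) * selfEnergy logDensity 0 (2 * π) (wlift γ ξ) := by
  have hintegrand (θ θ' : ℝ) : (Real.log (Mker γ ξ θ θ') - 2) * Mker γ ξ θ θ' * D2Mker γ ξ θ θ' =
      -2 * (logDensity (wlift γ ξ θ - wlift γ ξ θ') *
        ⟪deriv (wlift γ ξ) θ, deriv (wlift γ ξ) θ'⟫_ℝ) := by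
    rw [Mker_eq_norm_sq hγ, D2Mker_eq hγ hw, logDensity]
    ring
  simp only [Epseudo, selfEnergy, hintegrand, intervalIntegral.integral_const_mul]
  field_simp
  ring

theorem hasDerivAt_selfEnergy_wlift (hγ : 0 < γ) (hξ : ContDiff ℝ 1 ξ) (hq : ContDiff ℝ 1 q)
    (hperξ : Periodic ξ (2 * π)) (hperq : Periodic q (2 * π)) {U : Set ℝ} (hU : IsOpen U)
    (h0 : (0 : ℝ) ∈ U) (hpos : ∀ s ∈ U, ∀ θ, 0 < 1 + 2 * (ξ θ + s * q θ)) :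
    HasDerivAt (fun s => selfEnergy logDensity 0 (2 * π) (wlift γ fun θ => ξ θ + s * q θ))
      (2 * ∫ θ in 0..2 * π, q θ * ∫ θ' in 0..2 * π,
        (conj (logGradient (wlift γ ξ θ - wlift γ ξ θ')) * deriv (wlift γ ξ) θ').im) 0 := by
  obtain ⟨p, u, hw⟩ := exists_isVariation_wlift γ hξ hq hpos
  have hpos₀ := hpos 0 h0
  have hmain := hw.hasDerivAt_selfEnergy (Φ := logDensity) (G := logGradient)
    (a := 0) (b := 2 * π) hU h0
  simp only [zero_mul, add_zero] at hmain hpos₀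
  refine (hmain (wlift_periodic γ hperξ).eq (liftVelocity_periodic γ hperξ hperq).eq
    hasGradientAt_logDensity continuous_logGradient logDensity_even).congr_deriv ?_
  simp only [im_conj_liftVelocity_mul_deriv_wlift hγ q (hξ.differentiable one_ne_zero _)
    (hpos₀ _)]

end Lift

theorem pseudo_energy_differential_general {γ : ℝ} (hγ : 0 < γ) {ξ q : ℝ → ℝ}
    (hξ : ContDiff ℝ 1 ξ) (hq : ContDiff ℝ 1 q) (hperξ : Periodic ξ (2 * π))
    (hperq : Periodic q (2 * π)) (hpos : ∀ θ, 0 < 1 + 2 * ξ θ) :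
    (∀ θ : ℝ, IntervalIntegrable
      (fun θ' => (Real.log (Complex.normSq (wlift γ ξ θ - wlift γ ξ θ')) - 1) *
        ((conj (wlift γ ξ θ') - conj (wlift γ ξ θ)) * deriv (wlift γ ξ) θ').im)
      volume 0 (2 * π)) ∧
    HasDerivAt (fun s => Epseudo γ fun θ => ξ θ + s * q θ)
      (∫ θ in 0..2 * π, q θ * (1 / (4 * π) * ∫ θ' in 0..2 * π,
        (Real.log (Complex.normSq (wlift γ ξ θ - wlift γ ξ θ')) - 1) *
          ((conj (wlift γ ξ θ') - conj (wlift γ ξ θ)) * deriv (wlift γ ξ) θ').im)) 0 := by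
  simp only [log_normSq_sub_one_mul_im]
  refine ⟨fun θ => ?_, ?_⟩
  · have hw := (differentiable_wlift γ (hξ.differentiable one_ne_zero) hpos).continuous
    have hw' := continuous_deriv_wlift γ hξ hpos
    have hG := continuous_logGradient (E := ℂ)
    exact Continuous.intervalIntegrable (by fun_prop) _ _
  · obtain ⟨U, hposU, hU, h0⟩ := eventually_nhds_iff.1 <| eventually_forall_pos_of_periodic
      (f := fun θ => 1 + 2 * ξ θ) (g := fun θ => 2 * q θ) (by fun_prop) (by fun_prop)
      (fun θ => by simp only [hperξ θ]) (fun θ => by simp only [hperq θ]) two_pi_pos hpos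
    replace hposU : ∀ s ∈ U, ∀ θ, 0 < 1 + 2 * (ξ θ + s * q θ) := fun s hs θ => by
      linarith [hposU s hs θ]
    have hE : (fun s => Epseudo γ fun θ => ξ θ + s * q θ) =ᶠ[𝓝 0] fun s =>
        -(1 / (16 * π)) * selfEnergy logDensity 0 (2 * π) (wlift γ fun θ => ξ θ + s * q θ) := by
      filter_upwards [hU.mem_nhds h0] with s hs
      exact Epseudo_eq_selfEnergy hγ <|
        differentiable_wlift γ (by fun_prop (disch := norm_num)) (hposU s hs)
    refine (((hasDerivAt_selfEnergy_wlift hγ hξ hq hperξ hperq hU h0 hposU).const_mul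
      (-(1 / (16 * π)))).congr_of_eventuallyEq hE).congr_deriv ?_
    simp only [intervalIntegral.integral_const_mul, mul_left_comm (q _)]
    ring

end

/-- Differential of the pseudo-energy (Lemma 2.3). -/
theorem pseudo_energy_differential
    (γ : ℝ) (hγ : 1 ≤ γ)
    (ξ q : ℝ → ℝ) (hξ : ContDiff ℝ 2 ξ) (hq : ContDiff ℝ 2 q)
    (hperξ : ∀ θ, ξ (θ + 2 * π) = ξ θ) (hperq : ∀ θ, q (θ + 2 * π) = q θ)
    (hq0 : (∫ θ in (0:ℝ)..(2 * π), q θ) = 0)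
    (hpos : ∀ s ∈ Set.Icc (-1:ℝ) 1, ∀ θ, 0 < 1 + 2 * (ξ θ + s * q θ))
    (hder : ∀ s ∈ Set.Icc (-1:ℝ) 1, ∀ θ,
      deriv (wlift γ (fun t => ξ t + s * q t)) θ ≠ 0)
    (hinj : ∀ s ∈ Set.Icc (-1:ℝ) 1, ∀ θ θ' : ℝ, (∀ k : ℤ, θ - θ' ≠ 2 * π * k) →
      wlift γ (fun t => ξ t + s * q t) θ ≠ wlift γ (fun t => ξ t + s * q t) θ') :
    -- the inner integral is absolutely convergent
    (∀ θ : ℝ, IntervalIntegrable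
      (fun θ' =>
        (Real.log (Complex.normSq (wlift γ ξ θ - wlift γ ξ θ')) - 1) *
          (((starRingEnd ℂ) (wlift γ ξ θ') - (starRingEnd ℂ) (wlift γ ξ θ)) *
            deriv (wlift γ ξ) θ').im)
      volume 0 (2 * π)) ∧
    -- s ↦ E(ξ + s q) is differentiable at 0 with the stated derivative
    HasDerivAt (fun s => Epseudo γ (fun θ => ξ θ + s * q θ))
      (∫ θ in (0:ℝ)..(2 * π),
        q θ *
          ((1 / (4 * π)) *
            ∫ θ' in (0:ℝ)..(2 * π),
              (Real.log (Complex.normSq (wlift γ ξ θ - wlift γ ξ θ')) - 1) *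
                (((starRingEnd ℂ) (wlift γ ξ θ') - (starRingEnd ℂ) (wlift γ ξ θ)) *
                  deriv (wlift γ ξ) θ').im))
      0 :=
  pseudo_energy_differential_general (by linarith) (hξ.of_le one_le_two) (hq.of_le one_le_two)
    hperξ hperq fun θ => by simpa using hpos 0 (by norm_num) θ
end

section
/- (Action of the unperturbed integral operator on Fourier modes, Lemma 3.2.) For every γ ≥ 1, every integer j ≠ 0 and every θ ∈ ℝ, the absolutely convergent improper integral (1/(4π))·∫₀^{2π} ln(M(0)(θ,θ'))·e^{ijθ'} dθ' equals −(1/(2|j|))·( e^{ijθ} + κ_j·e^{−ijθ} ), where κ_j := ((γ−1)/(γ+1))^{|j|}. -/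
open Real MeasureTheory

/-- `M(0)(θ,θ') := γ(cos θ − cos θ')² + γ⁻¹(sin θ − sin θ')²`. -/
noncomputable def M0 (γ θ θ' : ℝ) : ℝ :=
  γ * (Real.cos θ - Real.cos θ') ^ 2 + γ⁻¹ * (Real.sin θ - Real.sin θ') ^ 2

/-!
With `κ = (γ - 1) / (γ + 1)`, the kernel is a product of squared distances in the complex plane,
`M(0)(θ, t) = (γ + 1)² / (4 γ) · |1 - e^{i(t - θ)}|² · |1 - κ e^{i(t + θ)}|²`,
so its logarithm is a constant plus translates of `log |1 - ρ e^{is}|` for `ρ = 1` and `ρ = κ`.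
For `|ρ| < 1` the Taylor series of `log (1 - z)` reads off the Fourier coefficients of
`log |1 - ρ e^{is}|`; the case `|ρ| = 1` follows by letting `rρ → ρ` as `r → 1⁻`, with
`|log |1 - ρ e^{is}|| + log 2` as dominating function. A translation by `φ` multiplies the `j`-th
coefficient by `e^{ijφ}`.
-/

section

open Filter Topology
open Complex (I)

section NormedSpace

variable {E : Type*} [NormedAddCommGroup E] [NormedSpace ℝ E] {z w : E} {r : ℝ}

theorem norm_sub_le_two_mul_norm_sub_smul (hwz : ‖w‖ ≤ ‖z‖) (h0 : 0 ≤ r) (h1 : r ≤ 1) :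
    ‖z - w‖ ≤ 2 * ‖z - r • w‖ := by
  have hr : ‖r • w‖ = r * ‖w‖ := norm_smul_of_nonneg h0 w
  calc ‖z - w‖ = ‖(z - r • w) - (1 - r) • w‖ := by rw [sub_smul, one_smul]; abel_nf
    _ ≤ ‖z - r • w‖ + (1 - r) * ‖w‖ := by
      rw [← norm_smul_of_nonneg (sub_nonneg.2 h1) w]
      exact norm_sub_le _ _
    _ ≤ ‖z - r • w‖ + (‖z‖ - ‖r • w‖) := by rw [hr]; linarith
    _ ≤ 2 * ‖z - r • w‖ := by linarith [norm_sub_norm_le z (r • w)]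

theorem abs_log_norm_sub_smul_le (hz : ‖z‖ ≤ 1) (hwz : ‖w‖ ≤ ‖z‖) (hne : z ≠ w)
    (h0 : 0 ≤ r) (h1 : r ≤ 1) :
    |log ‖z - r • w‖| ≤ |log ‖z - w‖| + log 2 := by
  have hpos : 0 < ‖z - w‖ := norm_sub_pos_iff.2 hne
  have hlower := norm_sub_le_two_mul_norm_sub_smul hwz h0 h1
  have hpos' : 0 < ‖z - r • w‖ := by linarith
  have hupper : ‖z - r • w‖ ≤ 2 := by
    have hr : ‖r • w‖ ≤ ‖w‖ := by
      rw [norm_smul_of_nonneg h0]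
      exact mul_le_of_le_one_left (norm_nonneg w) h1
    linarith [norm_sub_le z (r • w)]
  have hlog_lower : log ‖z - w‖ ≤ log 2 + log ‖z - r • w‖ := by
    rw [← log_mul two_ne_zero hpos'.ne']
    exact log_le_log hpos hlower
  have hlog_upper : log ‖z - r • w‖ ≤ log 2 := log_le_log hpos' hupper
  rw [abs_le]
  constructor <;> linarith [neg_abs_le (log ‖z - w‖), abs_nonneg (log ‖z - w‖)]

end NormedSpace

/-- `c` is the Fourier integral `∫₀^{2π} f(t) e^{ijt} dt`, without normalization and with the sign
of the exponent opposite to Mathlib's `fourierCoeff`. Absolute convergence is part of the notion,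
so that these integrals can be added without side conditions. -/
structure HasFourierIntegral (f : ℝ → ℂ) (j : ℤ) (c : ℂ) : Prop where
  intervalIntegrable :
    IntervalIntegrable (fun t ↦ f t * Complex.exp (I * j * t)) volume 0 (2 * π)
  integral_eq : ∫ t in (0 : ℝ)..(2 * π), f t * Complex.exp (I * j * t) = c

theorem norm_exp_I_mul_int_mul_ofReal (j : ℤ) (t : ℝ) : ‖Complex.exp (I * j * t)‖ = 1 := by
  simp [Complex.norm_exp]

namespace HasFourierIntegral

variable {f g : ℝ → ℂ} {j : ℤ} {c d : ℂ}

theorem add (hf : HasFourierIntegral f j c) (hg : HasFourierIntegral g j d) :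
    HasFourierIntegral (fun t ↦ f t + g t) j (c + d) where
  intervalIntegrable := by
    simpa only [add_mul] using hf.intervalIntegrable.add hg.intervalIntegrable
  integral_eq := by
    simp only [add_mul]
    rw [intervalIntegral.integral_add hf.intervalIntegrable hg.intervalIntegrable,
      hf.integral_eq, hg.integral_eq]

theorem const_mul (hf : HasFourierIntegral f j c) (a : ℂ) :
    HasFourierIntegral (fun t ↦ a * f t) j (a * c) where
  intervalIntegrable := by
    simpa only [mul_assoc a] using hf.intervalIntegrable.const_mul a
  integral_eq := by
    simp only [mul_assoc a]
    rw [intervalIntegral.integral_const_mul, hf.integral_eq]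

theorem congr_ae (hf : HasFourierIntegral f j c) (hfg : f =ᵐ[volume] g) :
    HasFourierIntegral g j c := by
  have hfg' : (fun t : ℝ ↦ f t * Complex.exp (I * j * t)) =ᵐ[volume]
      fun t ↦ g t * Complex.exp (I * j * t) := hfg.mul .rfl
  refine ⟨hf.intervalIntegrable.congr_ae (ae_restrict_of_ae hfg'), ?_⟩
  rw [← hf.integral_eq]
  exact intervalIntegral.integral_congr_ae (hfg'.mono fun t ht _ ↦ ht.symm)

theorem comp_sub_right (hf : HasFourierIntegral f j c) (hper : Function.Periodic f (2 * π))
    (φ : ℝ) :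
    HasFourierIntegral (fun t ↦ f (t - φ)) j (Complex.exp (I * j * φ) * c) := by
  set F : ℝ → ℂ := fun t ↦ f t * Complex.exp (I * j * t) with hF
  have hFper : Function.Periodic F (2 * π) := fun t ↦ by
    have hexp : I * j * ((t + 2 * π : ℝ) : ℂ) = I * j * t + j * (2 * π * I) := by
      push_cast; ring
    simp only [hF, hper t, hexp, Complex.exp_add, Complex.exp_int_mul_two_pi_mul_I, mul_one]
  have hshift : (fun t : ℝ ↦ f (t - φ) * Complex.exp (I * j * t)) =
      fun t ↦ Complex.exp (I * j * φ) * F (t - φ) := by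
    funext t
    rw [hF, mul_left_comm, ← Complex.exp_add]
    congr 2
    push_cast; ring
  have hFint : IntervalIntegrable F volume 0 (0 + 2 * π) := by
    simpa only [zero_add] using hf.intervalIntegrable
  constructor
  · have hFshift : IntervalIntegrable (fun t ↦ F (t - φ)) volume 0 (2 * π) := by
      simpa using (hFper.intervalIntegrable two_pi_pos.ne' hFint (0 - φ)
        (2 * π - φ)).comp_sub_right φ
    rw [hshift]
    exact hFshift.const_mul _
  · rw [hshift, intervalIntegral.integral_const_mul, intervalIntegral.integral_comp_sub_right,
      ← hf.integral_eq]
    congr 1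
    simpa [sub_eq_neg_add] using hFper.intervalIntegral_add_eq (-φ) 0

theorem of_hasSum {ι : Type*} [Countable ι] {F : ι → ℝ → ℂ} {a : ι → ℂ} {bound : ι → ℝ}
    (hF : ∀ k, HasFourierIntegral (F k) j (a k)) (hbound : ∀ k t, ‖F k t‖ ≤ bound k)
    (hsummable : Summable bound)
    (hf : IntervalIntegrable (fun t ↦ f t * Complex.exp (I * j * t)) volume 0 (2 * π))
    (hFf : ∀ t, HasSum (F · t) (f t)) (hac : HasSum a c) : HasFourierIntegral f j c := by
  refine ⟨hf, HasSum.unique ?_ hac⟩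
  rw [← funext fun k ↦ (hF k).integral_eq]
  refine intervalIntegral.hasSum_integral_of_dominated_convergence (fun k _ ↦ bound k)
    (fun k ↦ (hF k).intervalIntegrable.def'.aestronglyMeasurable) (fun k ↦ .of_forall fun t _ ↦ ?_)
    (.of_forall fun _ _ ↦ hsummable) intervalIntegrable_const
    (.of_forall fun t _ ↦ (hFf t).mul_right _)
  simpa only [norm_mul, norm_exp_I_mul_int_mul_ofReal, mul_one] using hbound k t

theorem of_tendsto {ι : Type*} {l : Filter ι} [l.NeBot] [l.IsCountablyGenerated]
    {F : ι → ℝ → ℂ} {a : ι → ℂ} {bound : ℝ → ℝ}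
    (hF : ∀ᶠ i in l, HasFourierIntegral (F i) j (a i))
    (hbound : ∀ᶠ i in l, ∀ᵐ t, ‖F i t‖ ≤ bound t)
    (hint : IntervalIntegrable bound volume 0 (2 * π))
    (hf : IntervalIntegrable (fun t ↦ f t * Complex.exp (I * j * t)) volume 0 (2 * π))
    (hFf : ∀ᵐ t, Tendsto (F · t) l (𝓝 (f t))) (hac : Tendsto a l (𝓝 c)) :
    HasFourierIntegral f j c := by
  refine ⟨hf, tendsto_nhds_unique ?_ hac⟩
  refine Tendsto.congr' (hF.mono fun i hi ↦ hi.integral_eq) ?_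
  refine intervalIntegral.tendsto_integral_filter_of_dominated_convergence bound
    (hF.mono fun i hi ↦ hi.intervalIntegrable.def'.aestronglyMeasurable)
    (hbound.mono fun i hi ↦ hi.mono fun t ht _ ↦ ?_) hint
    (hFf.mono fun t ht _ ↦ ht.mul_const _)
  simpa only [norm_mul, norm_exp_I_mul_int_mul_ofReal, mul_one] using ht

end HasFourierIntegral

theorem hasFourierIntegral_exp (k j : ℤ) :
    HasFourierIntegral (fun t ↦ Complex.exp (I * k * t)) j (if k + j = 0 then 2 * π else 0) := by
  refine ⟨Continuous.intervalIntegrable (by fun_prop) _ _, ?_⟩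
  have hadd (t : ℝ) : Complex.exp (I * k * t) * Complex.exp (I * j * t) =
      Complex.exp (I * (k + j : ℤ) * t) := by
    rw [← Complex.exp_add]
    push_cast; ring_nf
  simp only [hadd]
  split_ifs with h
  · simp [h]
  · have hc : I * ((k + j : ℤ) : ℂ) ≠ 0 := mul_ne_zero Complex.I_ne_zero (by exact_mod_cast h)
    have hperiod : I * ((k + j : ℤ) : ℂ) * ((2 * π : ℝ) : ℂ) = (k + j : ℤ) * (2 * π * I) := by
      push_cast; ring
    rw [integral_exp_mul_complex hc, hperiod, Complex.exp_int_mul_two_pi_mul_I]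
    simp

theorem hasFourierIntegral_const (a : ℂ) {j : ℤ} (hj : j ≠ 0) :
    HasFourierIntegral (fun _ ↦ a) j 0 := by
  simpa [hj] using (hasFourierIntegral_exp 0 j).const_mul a

theorem hasFourierIntegral_cos (k : ℕ) {j : ℤ} (hj : j ≠ 0) :
    HasFourierIntegral (fun t ↦ (cos (k * t) : ℂ)) j (if k = j.natAbs then π else 0) := by
  have hsum := ((hasFourierIntegral_exp k j).add (hasFourierIntegral_exp (-k) j)).const_mul (1 / 2)
  convert hsum using 1
  · funext t
    rw [Complex.ofReal_cos, Complex.cos]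
    push_cast; ring_nf
  · split_ifs <;> first | omega | ring

/-- `log |1 - ρ e^{is}|`, the logarithmic potential on the unit circle. It takes the junk value `0`
where `ρ e^{is} = 1`. -/
noncomputable def logKernel (ρ s : ℝ) : ℝ :=
  log ‖1 - ρ * Complex.exp (s * I)‖

theorem periodic_logKernel (ρ : ℝ) : Function.Periodic (logKernel ρ) (2 * π) := fun s ↦ by
  simp [logKernel, add_mul, Complex.exp_periodic _]

theorem norm_one_sub_mul_exp_sq (ρ s : ℝ) :
    ‖1 - ρ * Complex.exp (s * I)‖ ^ 2 = 1 + ρ ^ 2 - 2 * ρ * cos s := by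
  rw [Complex.sq_norm, Complex.normSq_apply]
  simp only [Complex.sub_re, Complex.sub_im, Complex.one_re, Complex.one_im,
    Complex.re_ofReal_mul, Complex.im_ofReal_mul, Complex.exp_ofReal_mul_I_re,
    Complex.exp_ofReal_mul_I_im]
  linear_combination ρ ^ 2 * sin_sq_add_cos_sq s

theorem ae_one_ne_mul_exp (ρ : ℝ) : ∀ᵐ s : ℝ, 1 ≠ ρ * Complex.exp (s * I) := by
  rcases eq_or_ne ρ 0 with rfl | hρ
  · simp
  · filter_upwards [((Set.countable_singleton 1).preimage_circleMap 0 hρ).ae_notMem volume]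
      with s hs
    simpa [circleMap, eq_comm] using hs

theorem intervalIntegrable_logKernel (ρ : ℝ) :
    IntervalIntegrable (logKernel ρ) volume 0 (2 * π) := by
  have h := circleIntegrable_log_norm_sub_const (a := 1) (c := 0) ρ
  simpa only [CircleIntegrable, circleMap, zero_add, norm_sub_rev _ (1 : ℂ)] using! h

theorem intervalIntegrable_logKernel_mul_exp (ρ : ℝ) (j : ℤ) :
    IntervalIntegrable (fun s ↦ (logKernel ρ s : ℂ) * Complex.exp (I * j * s))
      volume 0 (2 * π) := by
  have h := intervalIntegrable_logKernel ρ
  exact IntervalIntegrable.mul_continuousOn ⟨h.1.ofReal, h.2.ofReal⟩ (by fun_prop)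

theorem hasSum_logKernel {ρ : ℝ} (hρ : |ρ| < 1) (s : ℝ) :
    HasSum (fun k : ℕ ↦ -(ρ ^ k / k) * cos (k * s)) (logKernel ρ s) := by
  have hz : ‖ρ * Complex.exp (s * I)‖ < 1 := by simpa using hρ
  have h := (Complex.hasSum_re (Complex.hasSum_taylorSeries_neg_log hz)).neg
  rw [Complex.neg_re, neg_neg, Complex.log_re] at h
  refine h.congr_fun fun k ↦ ?_
  have hpow : (ρ * Complex.exp (s * I)) ^ k =
      ((ρ ^ k : ℝ) : ℂ) * Complex.exp ((k * s : ℝ) * I) := by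
    rw [mul_pow, ← Complex.exp_nat_mul]
    push_cast; ring_nf
  rw [hpow, Complex.div_natCast_re, Complex.re_ofReal_mul, Complex.exp_ofReal_mul_I_re]
  ring

theorem hasFourierIntegral_logKernel_of_abs_lt_one {ρ : ℝ} (hρ : |ρ| < 1) {j : ℤ} (hj : j ≠ 0) :
    HasFourierIntegral (fun s ↦ (logKernel ρ s : ℂ)) j (-(π / j.natAbs) * ρ ^ j.natAbs) := by
  have hterm (k : ℕ) := (hasFourierIntegral_cos k hj).const_mul (-((ρ : ℂ) ^ k / k))
  refine .of_hasSum (bound := fun k ↦ |ρ| ^ k) hterm (fun k t ↦ ?_)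
    (summable_geometric_of_lt_one (abs_nonneg ρ) hρ)
    (intervalIntegrable_logKernel_mul_exp ρ j) (fun t ↦ ?_) ?_
  · rw [norm_mul, norm_neg, norm_div, norm_pow, Complex.norm_real, Complex.norm_natCast,
      Complex.norm_real, norm_eq_abs, norm_eq_abs]
    have hdiv : |ρ| ^ k / k ≤ |ρ| ^ k := by
      rcases k.eq_zero_or_pos with rfl | hk
      · simp
      · exact div_le_self (by positivity) (by exact_mod_cast hk)
    exact (mul_le_of_le_one_right (by positivity) (abs_cos_le_one _)).trans hdiv
  · simpa using! Complex.hasSum_ofReal.2 (hasSum_logKernel hρ t)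
  · convert hasSum_single (f := fun k : ℕ ↦ -((ρ : ℂ) ^ k / k) * if k = j.natAbs then ↑π else 0)
      j.natAbs fun k hk ↦ by rw [if_neg hk, mul_zero] using 1
    rw [if_pos rfl]
    ring

theorem abs_logKernel_mul_le {ρ r s : ℝ} (hρ : |ρ| ≤ 1) (hne : 1 ≠ ρ * Complex.exp (s * I))
    (h0 : 0 ≤ r) (h1 : r ≤ 1) : |logKernel (r * ρ) s| ≤ |logKernel ρ s| + log 2 := by
  have hle : ‖ρ * Complex.exp (s * I)‖ ≤ ‖(1 : ℂ)‖ := by simpa using hρ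
  simpa [logKernel, mul_assoc] using abs_log_norm_sub_smul_le norm_one.le hle hne h0 h1

theorem tendsto_logKernel_mul {ρ s : ℝ} (hne : 1 ≠ ρ * Complex.exp (s * I)) :
    Tendsto (fun r ↦ logKernel (r * ρ) s) (𝓝 1) (𝓝 (logKernel ρ s)) := by
  refine Tendsto.log ?_ (norm_ne_zero_iff.2 (sub_ne_zero.2 hne))
  exact Continuous.tendsto' (by fun_prop) _ _ (by simp)

theorem hasFourierIntegral_logKernel {ρ : ℝ} (hρ : |ρ| ≤ 1) {j : ℤ} (hj : j ≠ 0) :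
    HasFourierIntegral (fun s ↦ (logKernel ρ s : ℂ)) j (-(π / j.natAbs) * ρ ^ j.natAbs) := by
  have hIoo : ∀ᶠ r : ℝ in 𝓝[<] 1, r ∈ Set.Ioo (0 : ℝ) 1 := Ioo_mem_nhdsLT one_pos
  refine .of_tendsto (l := 𝓝[<] (1 : ℝ)) (F := fun r s ↦ (logKernel (r * ρ) s : ℂ))
    (a := fun r ↦ -(π / j.natAbs) * ((r * ρ : ℝ) : ℂ) ^ j.natAbs)
    (bound := fun s ↦ |logKernel ρ s| + log 2) ?_ ?_
    ((intervalIntegrable_logKernel ρ).abs.add intervalIntegrable_const)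
    (intervalIntegrable_logKernel_mul_exp ρ j) ?_ ?_
  · filter_upwards [hIoo] with r hr
    refine hasFourierIntegral_logKernel_of_abs_lt_one ?_ hj
    rw [abs_mul, abs_of_pos hr.1]
    exact (mul_le_of_le_one_right hr.1.le hρ).trans_lt hr.2
  · filter_upwards [hIoo] with r hr
    filter_upwards [ae_one_ne_mul_exp ρ] with s hs
    rw [Complex.norm_real, norm_eq_abs]
    exact abs_logKernel_mul_le hρ hs hr.1.le hr.2.le
  · filter_upwards [ae_one_ne_mul_exp ρ] with s hs
    exact ((Complex.continuous_ofReal.tendsto _).comp (tendsto_logKernel_mul hs)).mono_left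
      nhdsWithin_le_nhds
  · exact (Continuous.tendsto' (by fun_prop) _ _ (by simp)).mono_left nhdsWithin_le_nhds

theorem hasFourierIntegral_logKernel_sub {ρ : ℝ} (hρ : |ρ| ≤ 1) {j : ℤ} (hj : j ≠ 0) (φ : ℝ) :
    HasFourierIntegral (fun t ↦ (logKernel ρ (t - φ) : ℂ)) j
      (Complex.exp (I * j * φ) * (-(π / j.natAbs) * ρ ^ j.natAbs)) :=
  (hasFourierIntegral_logKernel hρ hj).comp_sub_right
    ((periodic_logKernel ρ).comp ((↑) : ℝ → ℂ)) φ

theorem M0_eq_mul (γ θ t : ℝ) :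
    M0 γ θ t = (1 - cos (t - θ)) * (γ + γ⁻¹ - (γ - γ⁻¹) * cos (t + θ)) := by
  rw [M0, cos_sub, cos_add]
  have hsin_t : sin t ^ 2 = 1 - cos t ^ 2 := sin_sq t
  have hsin_θ : sin θ ^ 2 = 1 - cos θ ^ 2 := sin_sq θ
  ring_nf
  simp only [hsin_t, hsin_θ]
  ring

theorem M0_eq_mul_norm_sq {γ : ℝ} (hγ : 0 < γ) (θ t : ℝ) :
    M0 γ θ t = (γ + 1) ^ 2 / (4 * γ) * ‖1 - (1 : ℝ) * Complex.exp ((t - θ : ℝ) * I)‖ ^ 2 *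
      ‖1 - ((γ - 1) / (γ + 1) : ℝ) * Complex.exp ((t + θ : ℝ) * I)‖ ^ 2 := by
  rw [M0_eq_mul, norm_one_sub_mul_exp_sq, norm_one_sub_mul_exp_sq]
  field_simp
  ring

theorem abs_sub_one_div_add_one_lt_one {γ : ℝ} (hγ : 0 < γ) : |(γ - 1) / (γ + 1)| < 1 := by
  rw [abs_div, abs_of_pos (by linarith : 0 < γ + 1), div_lt_one (by linarith), abs_lt]
  constructor <;> linarith

theorem ae_log_M0_eq {γ : ℝ} (hγ : 0 < γ) (θ : ℝ) :
    ∀ᵐ t, log (M0 γ θ t) = log ((γ + 1) ^ 2 / (4 * γ)) + 2 * logKernel 1 (t - θ) +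
      2 * logKernel ((γ - 1) / (γ + 1)) (t + θ) := by
  have hsub := (measurePreserving_sub_right volume θ).quasiMeasurePreserving.ae
    (ae_one_ne_mul_exp 1)
  have hadd := (measurePreserving_add_right volume θ).quasiMeasurePreserving.ae
    (ae_one_ne_mul_exp ((γ - 1) / (γ + 1)))
  filter_upwards [hsub, hadd] with t hsub hadd
  have hc : (γ + 1) ^ 2 / (4 * γ) ≠ 0 := by positivity
  have hsub' := pow_ne_zero 2 (norm_ne_zero_iff.2 (sub_ne_zero.2 hsub))
  have hadd' := pow_ne_zero 2 (norm_ne_zero_iff.2 (sub_ne_zero.2 hadd))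
  rw [M0_eq_mul_norm_sq hγ, log_mul (mul_ne_zero hc hsub') hadd', log_mul hc hsub', log_pow,
    log_pow, logKernel, logKernel, Nat.cast_ofNat]

theorem hasFourierIntegral_log_M0 {γ : ℝ} (hγ : 0 < γ) {j : ℤ} (hj : j ≠ 0) (θ : ℝ) :
    HasFourierIntegral (fun t ↦ (log (M0 γ θ t) : ℂ)) j
      (-(2 * π / j.natAbs) * (Complex.exp (I * j * θ) +
        ((((γ - 1) / (γ + 1)) ^ j.natAbs : ℝ) : ℂ) * Complex.exp (-(I * j * θ)))) := by
  have hconst := hasFourierIntegral_const (log ((γ + 1) ^ 2 / (4 * γ))) hj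
  have hone := (hasFourierIntegral_logKernel_sub abs_one.le hj θ).const_mul 2
  have hκ := (hasFourierIntegral_logKernel_sub (abs_sub_one_div_add_one_lt_one hγ).le hj
    (-θ)).const_mul 2
  convert ((hconst.add hone).add hκ).congr_ae ?_ using 1
  · push_cast
    rw [one_pow, mul_neg]
    ring
  · filter_upwards [ae_log_M0_eq hγ θ] with t ht
    simp [ht]

end

theorem W0_fourier_modes_general (γ : ℝ) (hγ : 0 < γ) (j : ℤ) (hj : j ≠ 0) (θ : ℝ) :
    IntervalIntegrable
      (fun θ' => (Real.log (M0 γ θ θ') : ℂ) * Complex.exp (Complex.I * j * θ'))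
      volume 0 (2 * π) ∧
    (1 / (4 * (π : ℂ))) *
        (∫ θ' in (0:ℝ)..(2 * π),
          (Real.log (M0 γ θ θ') : ℂ) * Complex.exp (Complex.I * j * θ'))
      = -(1 / (2 * (j.natAbs : ℂ))) *
          (Complex.exp (Complex.I * j * θ) +
            ((((γ - 1) / (γ + 1)) ^ j.natAbs : ℝ) : ℂ) *
              Complex.exp (-(Complex.I * j * θ))) := by
  have hlog := hasFourierIntegral_log_M0 hγ hj θ
  refine ⟨hlog.intervalIntegrable, ?_⟩
  have hπ : (π : ℂ) ≠ 0 := by exact_mod_cast pi_ne_zero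
  rw [hlog.integral_eq]
  field_simp
  norm_num

/-- Action of the unperturbed integral operator on Fourier modes (Lemma 3.2);
`κ_j := ((γ−1)/(γ+1))^{|j|}`. -/
theorem W0_fourier_modes (γ : ℝ) (hγ : 1 ≤ γ) (j : ℤ) (hj : j ≠ 0) (θ : ℝ) :
    -- the improper integral is absolutely convergent
    IntervalIntegrable
      (fun θ' => (Real.log (M0 γ θ θ') : ℂ) * Complex.exp (Complex.I * j * θ'))
      volume 0 (2 * π) ∧
    -- its value
    (1 / (4 * (π : ℂ))) *
        (∫ θ' in (0:ℝ)..(2 * π),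
          (Real.log (M0 γ θ θ') : ℂ) * Complex.exp (Complex.I * j * θ'))
      = -(1 / (2 * (j.natAbs : ℂ))) *
          (Complex.exp (Complex.I * j * θ) +
            ((((γ - 1) / (γ + 1)) ^ j.natAbs : ℝ) : ℂ) *
              Complex.exp (-(Complex.I * j * θ))) :=
  W0_fourier_modes_general γ (one_pos.trans_le hγ) j hj θ
end
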